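/- For the doubly symmetric binary source with crossover probability ρ ∈ [0,1/2] and Hamming distortions, let d* = 1/2 − (1/2)√(1−2ρ). Then for all d ∈ [0,d*], R_CR(d,d) = R(d,d) = h(ρ) − h(d). -/

import Mathlib

open scoped BigOperators Classical

noncomputable section

namespace TWR

/-- Base-2 Shannon entropy of a finitely supported distribution (with the
convention `0 * log 0 = 0`, automatic since `Real.logb 2 0 = 0`). -/
def H2 {α : Type} [Fintype α] (p : α → ℝ) : ℝ :=
  -∑ a, p a * Real.logb 2 (p a)

/-- `p` is a probability mass function. -/
def IsPmf {α : Type} [Fintype α] (p : α → ℝ) : Prop :=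
  (∀ a, 0 ≤ p a) ∧ ∑ a, p a = 1

/-- `W` is a conditional pmf. -/
def IsCondPmf {α β : Type} [Fintype β] (W : α → β → ℝ) : Prop :=
  ∀ a, IsPmf (W a)

/-- Mutual information `I(A;B)` (base 2) of a joint pmf on `α × β`. -/
def MI {α β : Type} [Fintype α] [Fintype β] (p : α × β → ℝ) : ℝ :=
  H2 (fun a => ∑ b, p (a, b)) + H2 (fun b => ∑ a, p (a, b)) - H2 p

/-- Conditional entropy `H(A|B)` of a joint pmf on `α × β`. -/
def condH {α β : Type} [Fintype α] [Fintype β] (p : α × β → ℝ) : ℝ :=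
  H2 p - H2 (fun b => ∑ a, p (a, b))

/-- Conditional mutual information `I(A;C|B)` of a joint pmf on `α × β × γ`,
conditioning on the middle coordinate (`I(A;C|B) = H(A,B)+H(B,C)-H(A,B,C)-H(B)`). -/
def condMI {α β γ : Type} [Fintype α] [Fintype β] [Fintype γ] (p : α × β × γ → ℝ) : ℝ :=
  H2 (fun ab : α × β => ∑ c, p (ab.1, ab.2, c)) +
    H2 (fun bc : β × γ => ∑ a, p (a, bc.1, bc.2)) -
    H2 p - H2 (fun b : β => ∑ a, ∑ c, p (a, b, c))

/-- Markov chain `A − B − C` for a joint pmf on `α × β × γ`. -/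
def Markov {α β γ : Type} [Fintype α] [Fintype β] [Fintype γ] (p : α × β × γ → ℝ) : Prop :=
  ∀ a b c, p (a, b, c) * (∑ a', ∑ c', p (a', b, c')) =
    (∑ c', p (a, b, c')) * (∑ a', p (a', b, c))

variable {𝒳 𝒴 Xh Yh 𝒲 𝒰 𝒱 : Type}
variable [Fintype 𝒳] [Fintype 𝒴] [Fintype Xh] [Fintype Yh]
variable [Fintype 𝒲] [Fintype 𝒰] [Fintype 𝒱]

/-- The i.i.d. block source. -/
def iid (q : 𝒳 × 𝒴 → ℝ) (n : ℕ) : (Fin n → 𝒳) × (Fin n → 𝒴) → ℝ :=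
  fun xy => ∏ i, q (xy.1 i, xy.2 i)

/-- Average distortion at receiver 1 of the RD code `(f, g1, ·)`. -/
def Delta1 (q : 𝒳 × 𝒴 → ℝ) (δ1 : 𝒳 → Xh → ℝ) {n m : ℕ}
    (f : (Fin n → 𝒳) × (Fin n → 𝒴) → Fin m)
    (g1 : Fin m × (Fin n → 𝒴) → Fin n → Xh) : ℝ :=
  ∑ xy : (Fin n → 𝒳) × (Fin n → 𝒴),
    iid q n xy * ((n : ℝ)⁻¹ * ∑ i, δ1 (xy.1 i) (g1 (f xy, xy.2) i))

/-- Average distortion at receiver 2 of the RD code `(f, ·, g2)`. -/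
def Delta2 (q : 𝒳 × 𝒴 → ℝ) (δ2 : 𝒴 → Yh → ℝ) {n m : ℕ}
    (f : (Fin n → 𝒳) × (Fin n → 𝒴) → Fin m)
    (g2 : Fin m × (Fin n → 𝒳) → Fin n → Yh) : ℝ :=
  ∑ xy : (Fin n → 𝒳) × (Fin n → 𝒴),
    iid q n xy * ((n : ℝ)⁻¹ * ∑ i, δ2 (xy.2 i) (g2 (f xy, xy.1) i))

/-- `r` is a `(d1,d2)`-achievable rate (source coding). -/
def RDAchievable (q : 𝒳 × 𝒴 → ℝ) (δ1 : 𝒳 → Xh → ℝ) (δ2 : 𝒴 → Yh → ℝ)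
    (d1 d2 r : ℝ) : Prop :=
  ∀ ε > (0 : ℝ), ∃ (n m : ℕ) (f : (Fin n → 𝒳) × (Fin n → 𝒴) → Fin m)
    (g1 : Fin m × (Fin n → 𝒴) → Fin n → Xh)
    (g2 : Fin m × (Fin n → 𝒳) → Fin n → Yh),
    0 < n ∧ Real.logb 2 m / n ≤ r + ε ∧
    Delta1 q δ1 f g1 ≤ d1 + ε ∧ Delta2 q δ2 f g2 ≤ d2 + ε

/-- The rate-distortion function `R(d1,d2)`. -/
def RD (q : 𝒳 × 𝒴 → ℝ) (δ1 : 𝒳 → Xh → ℝ) (δ2 : 𝒴 → Yh → ℝ) (d1 d2 : ℝ) : ℝ :=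
  sInf {r : ℝ | 0 ≤ r ∧ RDAchievable q δ1 δ2 d1 d2 r}

/-- `r` is `(d1,d2)`-achievable with common reconstructions. -/
def CRAchievable (q : 𝒳 × 𝒴 → ℝ) (δ1 : 𝒳 → Xh → ℝ) (δ2 : 𝒴 → Yh → ℝ)
    (d1 d2 r : ℝ) : Prop :=
  ∀ ε > (0 : ℝ), ∃ (n m : ℕ) (f : (Fin n → 𝒳) × (Fin n → 𝒴) → Fin m)
    (g1 : Fin m × (Fin n → 𝒴) → Fin n → Xh)
    (g2 : Fin m × (Fin n → 𝒳) → Fin n → Yh)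
    (φ1 : Fin m × (Fin n → 𝒴) → Fin n → Yh)
    (φ2 : Fin m × (Fin n → 𝒳) → Fin n → Xh),
    0 < n ∧ Real.logb 2 m / n ≤ r + ε ∧
    Delta1 q δ1 f g1 ≤ d1 + ε ∧ Delta2 q δ2 f g2 ≤ d2 + ε ∧
    (∑ xy : (Fin n → 𝒳) × (Fin n → 𝒴),
      if φ2 (f xy, xy.1) = g1 (f xy, xy.2) then 0 else iid q n xy) ≤ ε ∧
    (∑ xy : (Fin n → 𝒳) × (Fin n → 𝒴),
      if φ1 (f xy, xy.2) = g2 (f xy, xy.1) then 0 else iid q n xy) ≤ ε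

/-- The common-reconstruction rate-distortion function `R_CR(d1,d2)`. -/
def CRRD (q : 𝒳 × 𝒴 → ℝ) (δ1 : 𝒳 → Xh → ℝ) (δ2 : 𝒴 → Yh → ℝ) (d1 d2 : ℝ) : ℝ :=
  sInf {r : ℝ | 0 ≤ r ∧ CRAchievable q δ1 δ2 d1 d2 r}

/-- The conditional rate-distortion function `R_{X|Y}(d1)`. -/
def condRD (q : 𝒳 × 𝒴 → ℝ) (δ1 : 𝒳 → Xh → ℝ) (d1 : ℝ) : ℝ :=
  sInf {r : ℝ | ∃ W : 𝒳 × 𝒴 → Xh → ℝ, IsCondPmf W ∧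
    (∑ x, ∑ y, ∑ xh, q (x, y) * W (x, y) xh * δ1 x xh) ≤ d1 ∧
    r = condMI (fun t : 𝒳 × 𝒴 × Xh => q (t.1, t.2.1) * W (t.1, t.2.1) t.2.2)}

/-- Swap the two components of a joint source. -/
def swap (q : 𝒳 × 𝒴 → ℝ) : 𝒴 × 𝒳 → ℝ := fun t => q (t.2, t.1)

/-- The marginal rate-distortion function `R_X(d)`. -/
def margRD (qX : 𝒳 → ℝ) (δ1 : 𝒳 → Xh → ℝ) (d1 : ℝ) : ℝ :=
  sInf {r : ℝ | ∃ W : 𝒳 → Xh → ℝ, IsCondPmf W ∧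
    (∑ x, ∑ xh, qX x * W x xh * δ1 x xh) ≤ d1 ∧
    r = MI (fun t : 𝒳 × Xh => qX t.1 * W t.1 t.2)}

def margX (q : 𝒳 × 𝒴 → ℝ) : 𝒳 → ℝ := fun x => ∑ y, q (x, y)
def margY (q : 𝒳 × 𝒴 → ℝ) : 𝒴 → ℝ := fun y => ∑ x, q (x, y)

/-- The joint rate-distortion function `R_{XY}(d1,d2)`. -/
def jointRD (q : 𝒳 × 𝒴 → ℝ) (δ1 : 𝒳 → Xh → ℝ) (δ2 : 𝒴 → Yh → ℝ) (d1 d2 : ℝ) : ℝ :=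
  sInf {r : ℝ | ∃ W : 𝒳 × 𝒴 → Xh × Yh → ℝ, IsCondPmf W ∧
    (∑ xy : 𝒳 × 𝒴, ∑ z : Xh × Yh, q xy * W xy z * δ1 xy.1 z.1) ≤ d1 ∧
    (∑ xy : 𝒳 × 𝒴, ∑ z : Xh × Yh, q xy * W xy z * δ2 xy.2 z.2) ≤ d2 ∧
    r = MI (fun t : (𝒳 × 𝒴) × (Xh × Yh) => q t.1 * W t.1 t.2)}

/-- The Wyner–Ziv rate-distortion function `R^{WZ}_{X|Y}(d1)`
(with auxiliary alphabet of cardinality `|𝒳| + 1`). -/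
def wzRD (q : 𝒳 × 𝒴 → ℝ) (δ1 : 𝒳 → Xh → ℝ) (d1 : ℝ) : ℝ :=
  sInf {r : ℝ | ∃ p : Fin (Fintype.card 𝒳 + 1) × 𝒳 × 𝒴 → ℝ, IsPmf p ∧
    (∀ x y, (∑ a, p (a, x, y)) = q (x, y)) ∧ Markov p ∧
    (∃ π1 : Fin (Fintype.card 𝒳 + 1) × 𝒴 → Xh,
      (∑ a, ∑ x, ∑ y, p (a, x, y) * δ1 x (π1 (a, y))) ≤ d1) ∧
    r = condMI (fun t : 𝒳 × 𝒴 × Fin (Fintype.card 𝒳 + 1) => p (t.2.2, t.1, t.2.1))}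

/-- The set over which the single-letter CR formula
`max{I(X;X̂,Ŷ|Y), I(Y;X̂,Ŷ|X)}` is minimised. -/
def crFormulaSet (q : 𝒳 × 𝒴 → ℝ) (δ1 : 𝒳 → Xh → ℝ) (δ2 : 𝒴 → Yh → ℝ)
    (d1 d2 : ℝ) : Set ℝ :=
  {r : ℝ | ∃ W : 𝒳 × 𝒴 → Xh × Yh → ℝ, IsCondPmf W ∧
    (∑ x, ∑ y, ∑ z : Xh × Yh, q (x, y) * W (x, y) z * δ1 x z.1) ≤ d1 ∧
    (∑ x, ∑ y, ∑ z : Xh × Yh, q (x, y) * W (x, y) z * δ2 y z.2) ≤ d2 ∧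
    r = max
      (condMI (fun t : 𝒳 × 𝒴 × (Xh × Yh) => q (t.1, t.2.1) * W (t.1, t.2.1) t.2.2))
      (condMI (fun t : 𝒴 × 𝒳 × (Xh × Yh) => q (t.2.1, t.1) * W (t.2.1, t.1) t.2.2))}

/-- Joint law of source blocks and channel outputs for a JSC encoder. -/
def jscP (q : 𝒳 × 𝒴 → ℝ) (qUV : 𝒲 → 𝒰 × 𝒱 → ℝ) {n m : ℕ}
    (f : (Fin n → 𝒳) × (Fin n → 𝒴) → Fin m → 𝒲)
    (x : Fin n → 𝒳) (y : Fin n → 𝒴) (u : Fin m → 𝒰) (v : Fin m → 𝒱) : ℝ :=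
  (∏ i, q (x i, y i)) * ∏ j, qUV (f (x, y) j) (u j, v j)

/-- `(d1,d2)` is achievable by joint source-channel coding with source rate `κs`
and channel rate `κc` (bandwidth expansion `κc/κs`). -/
def JSCAchievable (q : 𝒳 × 𝒴 → ℝ) (qUV : 𝒲 → 𝒰 × 𝒱 → ℝ)
    (δ1 : 𝒳 → Xh → ℝ) (δ2 : 𝒴 → Yh → ℝ) (κs κc d1 d2 : ℝ) : Prop :=
  ∀ ε > (0 : ℝ), ∃ (t n m : ℕ) (f : (Fin n → 𝒳) × (Fin n → 𝒴) → Fin m → 𝒲)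
    (g1 : (Fin m → 𝒰) × (Fin n → 𝒴) → Fin n → Xh)
    (g2 : (Fin m → 𝒱) × (Fin n → 𝒳) → Fin n → Yh),
    0 < t ∧ (n : ℝ) = κs * t ∧ (m : ℝ) = κc * t ∧
    (∑ x : Fin n → 𝒳, ∑ y : Fin n → 𝒴, ∑ u : Fin m → 𝒰, ∑ v : Fin m → 𝒱,
      jscP q qUV f x y u v * ((n : ℝ)⁻¹ * ∑ i, δ1 (x i) (g1 (u, y) i))) ≤ d1 + ε ∧
    (∑ x : Fin n → 𝒳, ∑ y : Fin n → 𝒴, ∑ u : Fin m → 𝒰, ∑ v : Fin m → 𝒱,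
      jscP q qUV f x y u v * ((n : ℝ)⁻¹ * ∑ i, δ2 (y i) (g2 (v, x) i))) ≤ d2 + ε

/-- `(d1,d2)` is achievable by joint source-channel coding with common
reconstructions, source rate `κs` and channel rate `κc`. -/
def CRJSCAchievable (q : 𝒳 × 𝒴 → ℝ) (qUV : 𝒲 → 𝒰 × 𝒱 → ℝ)
    (δ1 : 𝒳 → Xh → ℝ) (δ2 : 𝒴 → Yh → ℝ) (κs κc d1 d2 : ℝ) : Prop :=
  ∀ ε > (0 : ℝ), ∃ (t n m : ℕ) (f : (Fin n → 𝒳) × (Fin n → 𝒴) → Fin m → 𝒲)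
    (g1 : (Fin m → 𝒰) × (Fin n → 𝒴) → Fin n → Xh)
    (g2 : (Fin m → 𝒱) × (Fin n → 𝒳) → Fin n → Yh)
    (φ1 : (Fin m → 𝒰) × (Fin n → 𝒴) → Fin n → Yh)
    (φ2 : (Fin m → 𝒱) × (Fin n → 𝒳) → Fin n → Xh),
    0 < t ∧ (n : ℝ) = κs * t ∧ (m : ℝ) = κc * t ∧
    (∑ x : Fin n → 𝒳, ∑ y : Fin n → 𝒴, ∑ u : Fin m → 𝒰, ∑ v : Fin m → 𝒱,
      jscP q qUV f x y u v * ((n : ℝ)⁻¹ * ∑ i, δ1 (x i) (g1 (u, y) i))) ≤ d1 + ε ∧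
    (∑ x : Fin n → 𝒳, ∑ y : Fin n → 𝒴, ∑ u : Fin m → 𝒰, ∑ v : Fin m → 𝒱,
      jscP q qUV f x y u v * ((n : ℝ)⁻¹ * ∑ i, δ2 (y i) (g2 (v, x) i))) ≤ d2 + ε ∧
    (∑ x : Fin n → 𝒳, ∑ y : Fin n → 𝒴, ∑ u : Fin m → 𝒰, ∑ v : Fin m → 𝒱,
      if φ2 (v, x) = g1 (u, y) then 0 else jscP q qUV f x y u v) ≤ ε ∧
    (∑ x : Fin n → 𝒳, ∑ y : Fin n → 𝒴, ∑ u : Fin m → 𝒰, ∑ v : Fin m → 𝒱,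
      if φ1 (u, y) = g2 (v, x) then 0 else jscP q qUV f x y u v) ≤ ε

/-- `I(W;U)` under the joint law `pW · qUV` (U-marginal of the broadcast channel). -/
def chMIU (qUV : 𝒲 → 𝒰 × 𝒱 → ℝ) (pW : 𝒲 → ℝ) : ℝ :=
  MI (fun t : 𝒲 × 𝒰 => pW t.1 * ∑ v, qUV t.1 (t.2, v))

/-- `I(W;V)` under the joint law `pW · qUV` (V-marginal of the broadcast channel). -/
def chMIV (qUV : 𝒲 → 𝒰 × 𝒱 → ℝ) (pW : 𝒲 → ℝ) : ℝ :=
  MI (fun t : 𝒲 × 𝒱 => pW t.1 * ∑ u, qUV t.1 (u, t.2))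

/-- The doubly symmetric binary source with crossover probability `ρ`. -/
def dsbs (ρ : ℝ) : Bool × Bool → ℝ :=
  fun t => if t.1 = t.2 then (1 - ρ) / 2 else ρ / 2

/-- The Hamming distortion measure. -/
def dHam {α : Type} : α → α → ℝ := fun a b => if a = b then 0 else 1

/-- The binary entropy function (base 2). -/
def binEnt (x : ℝ) : ℝ := -(x * Real.logb 2 x) - (1 - x) * Real.logb 2 (1 - x)

/-- A difference distortion measure built from a per-letter function of the
(modular) difference. -/
def diffD {l : ℕ} (δ : Fin l → ℝ) : Fin l → Fin l → ℝ := fun a b => δ (a - b)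

/-- Capacity of the modulo-additive channel with noise `pN` and input
distortion constraint `d`. -/
def Cadd {l : ℕ} (δ : Fin l → ℝ) (d : ℝ) (pN : Fin l → ℝ) : ℝ :=
  sSup {r : ℝ | ∃ pW : Fin l → ℝ, IsPmf pW ∧ (∑ w, pW w * δ w) ≤ d ∧
    r = MI (fun t : Fin l × Fin l => pW t.1 * pN (t.2 - t.1))}

/-- The minimax (worst-noise) capacity under distortion constraint `d`. -/
def Cworst {l : ℕ} (δ : Fin l → ℝ) (d : ℝ) : ℝ :=
  sInf {r : ℝ | ∃ pN : Fin l → ℝ, IsPmf pN ∧ (∑ x, pN x * δ x) ≤ d ∧ r = Cadd δ d pN}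

/-- Wyner's common information `K(X;Y)` (auxiliary alphabet of size 4). -/
def wynerK (q : 𝒳 × 𝒴 → ℝ) : ℝ :=
  sInf {r : ℝ | ∃ W : 𝒳 × 𝒴 → Fin 4 → ℝ, IsCondPmf W ∧
    Markov (fun t : 𝒳 × Fin 4 × 𝒴 => q (t.1, t.2.2) * W (t.1, t.2.2) t.2.1) ∧
    r = MI (fun t : (𝒳 × 𝒴) × Fin 4 => q t.1 * W t.1 t.2)}

/-- The one-description (Kimura–Uyematsu) upper bound `R_U*(d1,d2)`. -/
def oneDescUB (q : 𝒳 × 𝒴 → ℝ) (δ1 : 𝒳 → Xh → ℝ) (δ2 : 𝒴 → Yh → ℝ) (d1 d2 : ℝ) : ℝ :=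
  sInf {r : ℝ | ∃ W : 𝒳 × 𝒴 → Fin (Fintype.card 𝒳 * Fintype.card 𝒴 + 2) → ℝ,
    IsCondPmf W ∧
    (∃ π1 : Fin (Fintype.card 𝒳 * Fintype.card 𝒴 + 2) × 𝒴 → Xh,
      (∑ x, ∑ y, ∑ c, q (x, y) * W (x, y) c * δ1 x (π1 (c, y))) ≤ d1) ∧
    (∃ π2 : Fin (Fintype.card 𝒳 * Fintype.card 𝒴 + 2) × 𝒳 → Yh,
      (∑ x, ∑ y, ∑ c, q (x, y) * W (x, y) c * δ2 y (π2 (c, x))) ≤ d2) ∧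
    r = max
      (condMI (fun t : 𝒳 × 𝒴 × Fin (Fintype.card 𝒳 * Fintype.card 𝒴 + 2) =>
        q (t.1, t.2.1) * W (t.1, t.2.1) t.2.2))
      (condMI (fun t : 𝒴 × 𝒳 × Fin (Fintype.card 𝒳 * Fintype.card 𝒴 + 2) =>
        q (t.2.1, t.1) * W (t.2.1, t.1) t.2.2))}

end TWR

/-!
For `d ≤ d*` the equation `(1 - 2 * ρ₀) * (1 - 2 * d) ^ 2 = 1 - 2 * ρ` has a solution
`ρ₀ ∈ [0, 1/2]`, so the source is a DSBS(`ρ₀`) pair `(U, V)` each of whose components is observed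
through its own BSC(`d`). A random codebook drawn from `iid (dsbs ρ₀) n` therefore covers the
source as soon as its rate exceeds `I(XY; UV) = 1 + h(ρ) - 2 * h(d)`. The encoder sends only the
index of a bin of rate just below `I(X; U) = I(Y; V) = 1 - h(d)`. Inside the bin the receiver that
knows `X` recognises `(U, V)` as the only codeword whose first component is close to `X`, and the
receiver that knows `Y` as the only one whose second component is close to `Y`. Both learn the whole
pair, so the reconstructions are common, at rate `h(ρ) - h(d)`.

Conversely, already the first receiver, with `Y` also available at the encoder, needs this rate:
for each `y` and message, spread a BSC(`d`) around the reconstruction of `X` and compare the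
resulting measure with the conditional law of `X` by Gibbs' inequality.

The covering argument needs `0 < d < 1 / 2` and `0 < ρ`. The case `ρ = 0` is trivial, and the other
endpoints follow by approximation.
-/

namespace TWR

section FiniteProbability

variable {α β : Type} [Fintype α] [Fintype β]

/-- The mass `P(A)` of the event `A` under the weights `P`, which need not be normalized. -/
def prob (P : α → ℝ) (A : Set α) : ℝ := ∑ a, A.indicator P a

lemma prob_mono {P : α → ℝ} (hP : ∀ a, 0 ≤ P a) {A B : Set α} (h : A ⊆ B) :
    prob P A ≤ prob P B :=
  Finset.sum_le_sum fun a _ => Set.indicator_le_indicator_of_subset h hP a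

lemma prob_nonneg {P : α → ℝ} (hP : ∀ a, 0 ≤ P a) (A : Set α) : 0 ≤ prob P A :=
  Finset.sum_nonneg fun _ _ => Set.indicator_nonneg (fun a _ => hP a) _

lemma prob_union_le {P : α → ℝ} (hP : ∀ a, 0 ≤ P a) (A B : Set α) :
    prob P (A ∪ B) ≤ prob P A + prob P B := by
  have hinter := prob_nonneg hP (A ∩ B)
  have hsum : prob P (A ∪ B) + prob P (A ∩ B) = prob P A + prob P B := by
    simp only [prob, ← Finset.sum_add_distrib, Set.indicator_union_add_inter_apply]
  linarith

lemma prob_compl {P : α → ℝ} (hP : IsPmf P) (A : Set α) : prob P Aᶜ = 1 - prob P A := by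
  rw [eq_sub_iff_add_eq', ← hP.2]
  simp only [prob, ← Finset.sum_add_distrib, Set.indicator_self_add_compl_apply]

lemma prob_iUnion {ι : Type} [Fintype ι] (P : α → ℝ) {A : ι → Set α}
    (hA : Pairwise (Function.onFun Disjoint A)) : prob P (⋃ i, A i) = ∑ i, prob P (A i) := by
  simp only [prob]
  rw [Finset.sum_comm]
  refine Finset.sum_congr rfl fun a _ => ?_
  simpa using Finset.indicator_biUnion_apply Finset.univ A (fun i _ j _ hij => hA hij) a

lemma prob_comp_equiv (e : α ≃ β) (P : β → ℝ) (A : Set β) :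
    prob (P ∘ e) (e ⁻¹' A) = prob P A :=
  e.sum_comp (A.indicator P)

lemma sum_ite_zero_eq_prob (P : α → ℝ) (p : α → Prop) {_ : DecidablePred p} :
    (∑ a, if p a then 0 else P a) = prob P {a | ¬ p a} := by
  refine Finset.sum_congr rfl fun a _ => ?_
  by_cases h : p a <;> simp [h]

lemma prob_joint (P : α → ℝ) (W : α → β → ℝ) (A : Set (α × β)) :
    prob (fun t => P t.1 * W t.1 t.2) A = ∑ a, P a * prob (W a) {b | (a, b) ∈ A} := by
  simp only [prob, Finset.mul_sum, Fintype.sum_prod_type]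
  refine Finset.sum_congr rfl fun a _ => Finset.sum_congr rfl fun b _ => ?_
  by_cases h : (a, b) ∈ A <;> simp [h]

lemma prob_fst_preimage (P : α → ℝ) {W : α → β → ℝ} (hW : IsCondPmf W) (A : Set α) :
    prob (fun t => P t.1 * W t.1 t.2) (Prod.fst ⁻¹' A) = prob P A := by
  rw [prob_joint]
  refine Finset.sum_congr rfl fun a _ => ?_
  by_cases h : a ∈ A <;> simp [prob, h, (hW a).2]

lemma prob_snd_preimage {P : α → ℝ} (hP : IsPmf P) (Q : β → ℝ) (B : Set β) :
    prob (fun t : α × β => P t.1 * Q t.2) (Prod.snd ⁻¹' B) = prob Q B := by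
  rw [← prob_fst_preimage Q (fun _ => hP) B,
    ← prob_comp_equiv (Equiv.prodComm β α) (fun t => P t.1 * Q t.2)]
  congr 1
  exact funext fun t => mul_comm _ _

lemma prob_joint_le {P : α → ℝ} (hP : IsPmf P) {W : α → β → ℝ} {A : Set (α × β)} {c : ℝ}
    (h : ∀ a, prob (W a) {b | (a, b) ∈ A} ≤ c) : prob (fun t => P t.1 * W t.1 t.2) A ≤ c := by
  rw [prob_joint]
  calc ∑ a, P a * prob (W a) {b | (a, b) ∈ A}
      ≤ ∑ a, P a * c := Finset.sum_le_sum fun a _ => mul_le_mul_of_nonneg_left (h a) (hP.1 a)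
    _ = c := by rw [← Finset.sum_mul, hP.2, one_mul]

lemma prob_lt_abs_le {P : α → ℝ} (hP : ∀ a, 0 ≤ P a) (X : α → ℝ) {t : ℝ} (ht : 0 < t) :
    prob P {a | t < |X a|} ≤ (∑ a, P a * X a ^ 2) / t ^ 2 := by
  rw [Finset.sum_div]
  refine Finset.sum_le_sum fun a _ => ?_
  have hPa := hP a
  by_cases ha : t < |X a|
  · rw [Set.indicator_of_mem (show a ∈ {a | t < |X a|} from ha), le_div_iff₀ (by positivity),
      ← sq_abs (X a)]
    gcongr
  · rw [Set.indicator_of_notMem (show a ∉ {a | t < |X a|} from ha)]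
    positivity

lemma exists_le_of_sum_mul_le {P : α → ℝ} (hP : IsPmf P) {X : α → ℝ} {c : ℝ}
    (h : ∑ a, P a * X a ≤ c) : ∃ a, X a ≤ c := by
  by_contra! hX
  obtain ⟨a, ha⟩ : ∃ a, P a ≠ 0 := by
    by_contra! hzero
    simpa [hzero] using hP.2
  have hlt : ∑ a, P a * c < ∑ a, P a * X a :=
    Finset.sum_lt_sum (fun b _ => mul_le_mul_of_nonneg_left (hX b).le (hP.1 b))
      ⟨a, Finset.mem_univ a, mul_lt_mul_of_pos_left (hX a) ((hP.1 a).lt_of_ne' ha)⟩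
  rw [← Finset.sum_mul, hP.2, one_mul] at hlt
  exact hlt.not_ge h

lemma sum_mul_le_add_prob_compl {P : α → ℝ} (hP : IsPmf P) {X : α → ℝ} (G : Set α) {D : ℝ}
    (hD : 0 ≤ D) (hG : ∀ a ∈ G, X a ≤ D) (hX : ∀ a, X a ≤ 1) :
    ∑ a, P a * X a ≤ D + prob P Gᶜ := by
  have hpoint (a : α) : P a * X a ≤ P a * D + Gᶜ.indicator P a := by
    have hPa := hP.1 a
    by_cases ha : a ∈ G
    · simpa [ha] using mul_le_mul_of_nonneg_left (hG a ha) hPa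
    · have := mul_le_mul_of_nonneg_left (hX a) hPa
      have := mul_nonneg hPa hD
      simp only [Set.mem_compl_iff, ha, not_false_eq_true, Set.indicator_of_mem]
      linarith
  calc ∑ a, P a * X a ≤ ∑ a, (P a * D + Gᶜ.indicator P a) :=
        Finset.sum_le_sum fun a _ => hpoint a
    _ = D + prob P Gᶜ := by
        rw [Finset.sum_add_distrib, ← Finset.sum_mul, hP.2, one_mul, prob]

/-- Gibbs' inequality. Positivity of `Q` on the support of `P` is needed because
`Real.log 0 = 0`. -/
lemma sum_mul_log_sub_log_nonpos {P Q : α → ℝ} (hP : IsPmf P) (hQ : ∀ a, 0 ≤ Q a)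
    (hQ1 : ∑ a, Q a ≤ 1) (hPQ : ∀ a, 0 < P a → 0 < Q a) :
    ∑ a, P a * (Real.log (Q a) - Real.log (P a)) ≤ 0 := by
  have hpoint (a : α) : P a * (Real.log (Q a) - Real.log (P a)) ≤ Q a - P a := by
    rcases (hP.1 a).eq_or_lt with h0 | hpos
    · simpa [← h0] using hQ a
    · have hlog := Real.log_le_sub_one_of_pos (div_pos (hPQ a hpos) hpos)
      rw [Real.log_div (hPQ a hpos).ne' hpos.ne'] at hlog
      calc P a * (Real.log (Q a) - Real.log (P a)) ≤ P a * (Q a / P a - 1) := by gcongr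
        _ = Q a - P a := by field_simp
  calc ∑ a, P a * (Real.log (Q a) - Real.log (P a)) ≤ ∑ a, (Q a - P a) :=
        Finset.sum_le_sum fun a _ => hpoint a
    _ ≤ 0 := by rw [Finset.sum_sub_distrib, hP.2]; linarith

end FiniteProbability

section ProductWeights

variable {ι α : Type} [Fintype ι] [DecidableEq ι] [Fintype α]

lemma IsPmf.pi {P : ι → α → ℝ} (hP : ∀ i, IsPmf (P i)) :
    IsPmf fun z : ι → α => ∏ i, P i (z i) :=
  ⟨fun _ => Finset.prod_nonneg fun i _ => (hP i).1 _,
    by rw [← Fintype.prod_sum]; exact Finset.prod_eq_one fun i _ => (hP i).2⟩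

lemma IsPmf.iid {𝒳 𝒴 : Type} [Fintype 𝒳] [Fintype 𝒴] {q : 𝒳 × 𝒴 → ℝ} (hq : IsPmf q) (n : ℕ) :
    IsPmf (iid q n) :=
  ⟨fun _ => Finset.prod_nonneg fun _ _ => hq.1 _,
    by rw [← (IsPmf.pi fun _ : Fin n => hq).2,
      ← (Equiv.arrowProdEquivProdArrow (Fin n) (fun _ => 𝒳) (fun _ => 𝒴)).sum_comp]; rfl⟩

lemma prob_univ_pi (P : ι → α → ℝ) (A : ι → Set α) :
    prob (fun z => ∏ i, P i (z i)) (Set.univ.pi A) = ∏ i, prob (P i) (A i) := by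
  simp only [prob, Fintype.prod_sum]
  refine Finset.sum_congr rfl fun z _ => ?_
  by_cases hz : ∀ i, z i ∈ A i
  · rw [Set.indicator_of_mem (show z ∈ Set.univ.pi A from fun i _ => hz i)]
    exact Finset.prod_congr rfl fun i _ => (Set.indicator_of_mem (hz i) _).symm
  · obtain ⟨i, hi⟩ := not_forall.1 hz
    rw [Set.indicator_of_notMem (show z ∉ Set.univ.pi A from fun h => hi (h i trivial))]
    exact (Finset.prod_eq_zero (Finset.mem_univ i) (Set.indicator_of_notMem hi _)).symm

lemma sum_pi_mul_apply (p : ι → α → ℝ) (f : α → ℝ) (i : ι) :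
    ∑ z : ι → α, (∏ k, p k (z k)) * f (z i) =
      (∑ a, p i a * f a) * ∏ k ∈ Finset.univ.erase i, ∑ a, p k a := by
  have hreweight (z : ι → α) : (∏ k, p k (z k)) * f (z i) =
      ∏ k, Function.update p i (fun a => p i a * f a) k (z k) := by
    rw [← Finset.mul_prod_erase _ _ (Finset.mem_univ i),
      ← Finset.mul_prod_erase _ _ (Finset.mem_univ i), Function.update_self, mul_right_comm]
    congr 1
    exact Finset.prod_congr rfl fun k hk => by
      rw [Function.update_of_ne (Finset.ne_of_mem_erase hk)]
  simp only [hreweight]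
  rw [← Fintype.prod_sum, ← Finset.mul_prod_erase _ _ (Finset.mem_univ i), Function.update_self]
  congr 1
  exact Finset.prod_congr rfl fun k hk => by
    rw [Function.update_of_ne (Finset.ne_of_mem_erase hk)]

lemma sum_pi_mul_sum {P : ι → α → ℝ} (hP : ∀ i, IsPmf (P i)) (f : ι → α → ℝ) :
    ∑ z : ι → α, (∏ k, P k (z k)) * ∑ i, f i (z i) = ∑ i, ∑ a, P i a * f i a := by
  simp only [Finset.mul_sum]
  rw [Finset.sum_comm]
  refine Finset.sum_congr rfl fun i _ => ?_
  rw [sum_pi_mul_apply, Finset.prod_eq_one fun k _ => (hP k).2, mul_one]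

lemma sum_pi_mul_apply_mul_apply_eq_zero (p : ι → α → ℝ) (f g : α → ℝ) {i j : ι} (hij : i ≠ j)
    (hf : ∑ a, p i a * f a = 0) :
    ∑ z : ι → α, (∏ k, p k (z k)) * (f (z i) * g (z j)) = 0 := by
  have hreweight (z : ι → α) : (∏ k, p k (z k)) * (f (z i) * g (z j)) =
      (∏ k, Function.update p j (fun a => p j a * g a) k (z k)) * f (z i) := by
    have herase : ∏ k ∈ Finset.univ.erase j, Function.update p j (fun a => p j a * g a) k (z k) =
        ∏ k ∈ Finset.univ.erase j, p k (z k) :=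
      Finset.prod_congr rfl fun k hk => by
        rw [Function.update_of_ne (Finset.ne_of_mem_erase hk)]
    rw [← Finset.mul_prod_erase _ _ (Finset.mem_univ j),
      ← Finset.mul_prod_erase _ _ (Finset.mem_univ j), Function.update_self, herase]
    ring
  simp only [hreweight]
  rw [sum_pi_mul_apply, Function.update_of_ne hij, hf, zero_mul]

lemma sum_pi_mul_sum_sq {P : ι → α → ℝ} (hP : ∀ i, IsPmf (P i)) {f : ι → α → ℝ}
    (hf : ∀ i, ∑ a, P i a * f i a = 0) :
    ∑ z : ι → α, (∏ k, P k (z k)) * (∑ i, f i (z i)) ^ 2 = ∑ i, ∑ a, P i a * f i a ^ 2 := by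
  simp only [sq, Finset.sum_mul_sum]
  simp only [Finset.mul_sum]
  rw [Finset.sum_comm]
  refine Finset.sum_congr rfl fun i _ => ?_
  rw [Finset.sum_comm, Finset.sum_eq_single i]
  · rw [sum_pi_mul_apply P (fun a => f i a * f i a),
      Finset.prod_eq_one fun k _ => (hP k).2, mul_one]
  · exact fun j _ hji => sum_pi_mul_apply_mul_apply_eq_zero P (f i) (f j) hji.symm (hf i)
  · simp

end ProductWeights

section RandomCoding

variable {S : Type}

/-- The bin `b` isolates `C` against `D`: some word of `b` lies in `C` and no other word of `b`
lies in `D`. With `C` the reconstructions acceptable to both receivers and `D` those plausible to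
at least one of them, both receivers recover the same word of the bin. -/
def Isolates {κ : Type} (C D : Set S) (b : κ → S) : Prop :=
  ∃ k, b k ∈ C ∧ ∀ k' ≠ k, b k' ∉ D

variable {κ : Type} [Fintype κ] [DecidableEq κ] [Fintype S]

lemma prob_isolates {Q : S → ℝ} (hQ : IsPmf Q) {C D : Set S} (hCD : C ⊆ D) :
    prob (fun b : κ → S => ∏ k, Q (b k)) {b | Isolates C D b} =
      Fintype.card κ * (prob Q C * (1 - prob Q D) ^ (Fintype.card κ - 1)) := by
  have hunion : {b : κ → S | Isolates C D b} =
      ⋃ k, Set.univ.pi (Function.update (fun _ => Dᶜ) k C) := by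
    ext b
    simp only [Isolates, Set.mem_ofPred_eq, Set.mem_iUnion, Set.mem_univ_pi,
      Function.forall_update_iff _ (fun k' A => b k' ∈ A), Set.mem_compl_iff]
  have hdisj : Pairwise (Function.onFun Disjoint fun k : κ =>
      Set.univ.pi (Function.update (fun _ => Dᶜ) k C)) := by
    refine fun k l hkl => Set.disjoint_left.2 fun b hk hl => ?_
    have hkC : b k ∈ C := by simpa using hk k trivial
    have hkD : b k ∈ Dᶜ := by simpa [hkl] using hl k trivial
    exact hkD (hCD hkC)
  have hword (k : κ) : prob (fun b : κ → S => ∏ k, Q (b k))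
      (Set.univ.pi (Function.update (fun _ => Dᶜ) k C)) =
        prob Q C * (1 - prob Q D) ^ (Fintype.card κ - 1) := by
    have hrest : ∏ l ∈ Finset.univ.erase k, prob Q (Function.update (fun _ => Dᶜ) k C l) =
        ∏ _l ∈ Finset.univ.erase k, (1 - prob Q D) :=
      Finset.prod_congr rfl fun l hl => by
        rw [Function.update_of_ne (Finset.ne_of_mem_erase hl), prob_compl hQ]
    rw [prob_univ_pi (fun _ => Q), ← Finset.mul_prod_erase _ _ (Finset.mem_univ k),
      Function.update_self, hrest, Finset.prod_const, Finset.card_erase_of_mem (Finset.mem_univ k),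
      Finset.card_univ]
  rw [hunion, prob_iUnion _ hdisj, Finset.sum_congr rfl fun k _ => hword k, Finset.sum_const,
    Finset.card_univ, nsmul_eq_mul]

lemma half_card_mul_prob_le_prob_isolates {Q : S → ℝ} (hQ : IsPmf Q) {C D : Set S} (hCD : C ⊆ D)
    (hD : Fintype.card κ * prob Q D ≤ 1 / 2) :
    Fintype.card κ * prob Q C / 2 ≤
      prob (fun b : κ → S => ∏ k, Q (b k)) {b | Isolates C D b} := by
  have hD0 := prob_nonneg hQ.1 D
  have hD1 : prob Q D ≤ 1 := by
    have := prob_compl hQ D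
    have := prob_nonneg hQ.1 Dᶜ
    linarith
  have hbernoulli := one_add_mul_le_pow (by linarith : (-2 : ℝ) ≤ -prob Q D) (Fintype.card κ - 1)
  have hcard : ((Fintype.card κ - 1 : ℕ) : ℝ) * prob Q D ≤ Fintype.card κ * prob Q D := by
    gcongr
    exact Nat.sub_le _ _
  have hhalf : 1 / 2 ≤ (1 - prob Q D) ^ (Fintype.card κ - 1) := by
    rw [← sub_eq_add_neg] at hbernoulli
    linarith
  have hC0 := prob_nonneg hQ.1 C
  rw [prob_isolates hQ hCD]
  calc Fintype.card κ * prob Q C / 2 = Fintype.card κ * (prob Q C * (1 / 2)) := by ring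
    _ ≤ Fintype.card κ * (prob Q C * (1 - prob Q D) ^ (Fintype.card κ - 1)) := by gcongr

lemma exists_prob_uncovered_le {A B ι : Type} [Fintype A] [Fintype B] [Fintype ι]
    {P : A → ℝ} (hP : IsPmf P) {μ : B → ℝ} (hμ : IsPmf μ) (good : B → Set A) (T : Set A)
    {p : ℝ} (hp : ∀ a ∈ T, p ≤ prob μ {b | a ∈ good b}) :
    ∃ c : ι → B, prob P (T \ ⋃ j, good (c j)) ≤ Real.exp (-(p * Fintype.card ι)) := by
  have hmiss (a : A) (ha : a ∈ T) : prob (fun c : ι → B => ∏ j, μ (c j))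
      (Set.univ.pi fun _ => {b | a ∈ good b}ᶜ) ≤ Real.exp (-(p * Fintype.card ι)) := by
    rw [prob_univ_pi (fun _ => μ), Finset.prod_const, Finset.card_univ, mul_comm p, ← mul_neg,
      Real.exp_nat_mul, prob_compl hμ]
    gcongr
    · rw [← prob_compl hμ]
      exact prob_nonneg hμ.1 _
    · exact (sub_le_sub_left (hp a ha) 1).trans (Real.one_sub_le_exp_neg p)
  refine exists_le_of_sum_mul_le (IsPmf.pi fun _ => hμ) ?_
  have hswap : ∑ c : ι → B, (∏ j, μ (c j)) * prob P (T \ ⋃ j, good (c j)) =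
      ∑ a, T.indicator P a * prob (fun c : ι → B => ∏ j, μ (c j))
        (Set.univ.pi fun _ => {b | a ∈ good b}ᶜ) := by
    simp only [prob, Finset.mul_sum]
    rw [Finset.sum_comm]
    refine Finset.sum_congr rfl fun a _ => Finset.sum_congr rfl fun c _ => ?_
    by_cases hT : a ∈ T <;> by_cases hc : ∃ j, a ∈ good (c j) <;>
      simp [hT, hc, mul_comm, ← not_exists]
  calc ∑ c : ι → B, (∏ j, μ (c j)) * prob P (T \ ⋃ j, good (c j))
      ≤ ∑ a, P a * Real.exp (-(p * Fintype.card ι)) := by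
        rw [hswap]
        refine Finset.sum_le_sum fun a _ => ?_
        have hPa := hP.1 a
        by_cases ha : a ∈ T
        · rw [Set.indicator_of_mem ha]
          gcongr
          exact hmiss a ha
        · rw [Set.indicator_of_notMem ha, zero_mul]
          positivity
    _ = Real.exp (-(p * Fintype.card ι)) := by rw [← Finset.sum_mul, hP.2, one_mul]

/-- If the output law of the channel `W` with input law `Q` charges `a` but few inputs in `R a`
can account for it, then `a` mostly arises from inputs outside `R a`; such outputs are rare. -/
lemma prob_sum_mul_of_prob_lt_le {A : Type} [Fintype A] {Q : S → ℝ} (hQ : ∀ s, 0 ≤ Q s)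
    {W : S → A → ℝ} (hW : ∀ s a, 0 ≤ W s a) (R : A → Set S) {w τ : ℝ} (hw : 0 ≤ w)
    (hR : ∀ a, ∀ s ∈ R a, W s a ≤ w) :
    prob (fun a => ∑ s, Q s * W s a)
      {a | 2 * (w * τ) ≤ ∑ s, Q s * W s a ∧ prob Q (R a) < τ} ≤
      2 * ∑ s, Q s * prob (W s) {a | s ∉ R a} := by
  have hrhs : ∑ s, Q s * prob (W s) {a | s ∉ R a} =
      ∑ a, ∑ s, (R a)ᶜ.indicator (fun s => Q s * W s a) s := by
    simp only [prob, Finset.mul_sum]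
    rw [Finset.sum_comm]
    refine Finset.sum_congr rfl fun a _ => Finset.sum_congr rfl fun s _ => ?_
    by_cases hs : s ∈ R a <;> simp [hs]
  have hinside (a : A) : ∑ s, (R a).indicator (fun s => Q s * W s a) s ≤ w * prob Q (R a) := by
    rw [prob, Finset.mul_sum]
    refine Finset.sum_le_sum fun s _ => ?_
    by_cases hs : s ∈ R a
    · simpa [hs, mul_comm w] using mul_le_mul_of_nonneg_left (hR a s hs) (hQ s)
    · simp [hs]
  rw [hrhs, Finset.mul_sum]
  refine Finset.sum_le_sum fun a _ => ?_
  have houtside : 0 ≤ ∑ s, (R a)ᶜ.indicator (fun s => Q s * W s a) s :=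
    Finset.sum_nonneg fun s _ =>
      Set.indicator_nonneg (fun s _ => mul_nonneg (hQ s) (hW s a)) s
  refine Set.indicator_apply_le' (fun ⟨hlarge, hfew⟩ => ?_) fun _ => by positivity
  have hsplit : ∑ s, Q s * W s a = ∑ s, (R a).indicator (fun s => Q s * W s a) s +
      ∑ s, (R a)ᶜ.indicator (fun s => Q s * W s a) s := by
    simp only [← Finset.sum_add_distrib, Set.indicator_self_add_compl_apply]
  have := hinside a
  have := mul_le_mul_of_nonneg_left hfew.le hw
  linarith

end RandomCoding

section Decoding

variable {𝒳 𝒴 𝒰 𝒱 κ : Type}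

/-- The source pairs `(x, y)` that the bin `b` serves: with `R₁ x` and `R₂ y` the reconstructions
acceptable for `x` and `y`, some word of `b` is acceptable in both coordinates, and no other
word of `b` is acceptable in either coordinate. -/
def resolved (R₁ : 𝒳 → Set 𝒰) (R₂ : 𝒴 → Set 𝒱) (b : κ → 𝒰 × 𝒱) : Set (𝒳 × 𝒴) :=
  {a | Isolates (R₁ a.1 ×ˢ R₂ a.2) (Prod.fst ⁻¹' R₁ a.1 ∪ Prod.snd ⁻¹' R₂ a.2) b}

lemma exists_decoder {S : Type} [Nonempty S] (A : Set S) (b : κ → S) :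
    ∃ s, ∀ k, b k ∈ A → (∀ k' ≠ k, b k' ∉ A) → s = b k := by
  by_cases h : ∃ k, b k ∈ A ∧ ∀ k' ≠ k, b k' ∉ A
  · obtain ⟨k, -, hk⟩ := h
    exact ⟨b k, fun l hl _ => by_contra fun hne => hk l (fun hlk => hne (by rw [hlk])) hl⟩
  · exact ⟨Classical.arbitrary S, fun k hk hk' => (h ⟨k, hk, hk'⟩).elim⟩

lemma exists_binning_code {J : Type} [Nonempty J] [Nonempty 𝒰] [Nonempty 𝒱]
    (R₁ : 𝒳 → Set 𝒰) (R₂ : 𝒴 → Set 𝒱) (c : J → κ → 𝒰 × 𝒱) :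
    ∃ (f : 𝒳 × 𝒴 → J) (e₁ : J × 𝒴 → 𝒰 × 𝒱) (e₂ : J × 𝒳 → 𝒰 × 𝒱),
      ∀ a ∈ ⋃ j, resolved R₁ R₂ (c j),
        e₁ (f a, a.2) ∈ R₁ a.1 ×ˢ R₂ a.2 ∧ e₂ (f a, a.1) = e₁ (f a, a.2) := by
  have hencoder (a : 𝒳 × 𝒴) :
      ∃ j, a ∈ ⋃ j, resolved R₁ R₂ (c j) → a ∈ resolved R₁ R₂ (c j) := by
    by_cases ha : a ∈ ⋃ j, resolved R₁ R₂ (c j)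
    · obtain ⟨j, hj⟩ := Set.mem_iUnion.1 ha
      exact ⟨j, fun _ => hj⟩
    · exact ⟨Classical.arbitrary J, fun h => (ha h).elim⟩
  choose f hf using hencoder
  choose e₁ he₁ using fun t : J × 𝒴 => exists_decoder (Prod.snd ⁻¹' R₂ t.2) (c t.1)
  choose e₂ he₂ using fun t : J × 𝒳 => exists_decoder (Prod.fst ⁻¹' R₁ t.2) (c t.1)
  refine ⟨f, e₁, e₂, fun a ha => ?_⟩
  obtain ⟨k, hk, hother⟩ := hf a ha
  have hdec₁ : e₁ (f a, a.2) = c (f a) k :=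
    he₁ (f a, a.2) k hk.2 fun k' hk' h => hother k' hk' (Or.inr h)
  have hdec₂ : e₂ (f a, a.1) = c (f a) k :=
    he₂ (f a, a.1) k hk.1 fun k' hk' h => hother k' hk' (Or.inl h)
  exact ⟨hdec₁ ▸ hk, hdec₂.trans hdec₁.symm⟩

end Decoding

section AchievableRates

variable {𝒳 𝒴 Xh Yh : Type} [Fintype 𝒳] [Fintype 𝒴]
variable {q : 𝒳 × 𝒴 → ℝ} {δ1 : 𝒳 → Xh → ℝ} {δ2 : 𝒴 → Yh → ℝ} {d1 d2 r : ℝ}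

lemma CRAchievable.rdAchievable (h : CRAchievable q δ1 δ2 d1 d2 r) :
    RDAchievable q δ1 δ2 d1 d2 r := by
  intro ε hε
  obtain ⟨n, m, f, g1, g2, -, -, hn, hrate, hΔ1, hΔ2, -, -⟩ := h ε hε
  exact ⟨n, m, f, g1, g2, hn, hrate, hΔ1, hΔ2⟩

lemma RDAchievable.nonneg (h : RDAchievable q δ1 δ2 d1 d2 r) : 0 ≤ r := by
  refine le_of_forall_pos_le_add fun ε hε => ?_
  obtain ⟨n, m, -, -, -, -, hrate, -, -⟩ := h ε hε
  have hlog : 0 ≤ Real.logb 2 m := div_nonneg (Real.log_natCast_nonneg m) (by positivity)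
  exact (by positivity : 0 ≤ Real.logb 2 m / n).trans hrate

lemma CRAchievable.of_approx
    (h : ∀ ε > 0, ∃ d1' ≤ d1 + ε, ∃ d2' ≤ d2 + ε, ∃ r' ≤ r + ε, CRAchievable q δ1 δ2 d1' d2' r') :
    CRAchievable q δ1 δ2 d1 d2 r := by
  intro ε hε
  obtain ⟨d1', hd1, d2', hd2, r', hr, h'⟩ := h (ε / 2) (half_pos hε)
  obtain ⟨n, m, f, g1, g2, φ1, φ2, hn, hrate, hΔ1, hΔ2, herr1, herr2⟩ := h' (ε / 2) (half_pos hε)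
  exact ⟨n, m, f, g1, g2, φ1, φ2, hn, by linarith, by linarith, by linarith, by linarith,
    by linarith⟩

lemma crAchievable_zero_of_eq {q : 𝒳 × 𝒳 → ℝ} (hq : ∀ x y, x ≠ y → q (x, y) = 0) :
    CRAchievable q dHam dHam 0 0 0 := by
  have hiid (xy : (Fin 1 → 𝒳) × (Fin 1 → 𝒳)) (hne : xy.1 ≠ xy.2) : iid q 1 xy = 0 := by
    have hne0 : xy.1 0 ≠ xy.2 0 := fun h => hne (funext fun i => by rw [Subsingleton.elim i 0, h])
    simp [iid, hq _ _ hne0]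
  have hterm (F : (Fin 1 → 𝒳) × (Fin 1 → 𝒳) → ℝ) (hF : ∀ x, F (x, x) = 0) :
      ∑ xy, iid q 1 xy * F xy = 0 := by
    refine Finset.sum_eq_zero fun ⟨x, y⟩ _ => ?_
    by_cases h : x = y
    · rw [h, hF, mul_zero]
    · rw [hiid _ h, zero_mul]
  refine fun ε hε => ⟨1, 1, fun _ => 0, Prod.snd, Prod.snd, Prod.snd, Prod.snd, one_pos,
    by simpa using hε.le, ?_, ?_, ?_, ?_⟩
  · exact (hterm _ fun x => by simp [dHam]).trans_le (by linarith)
  · exact (hterm _ fun x => by simp [dHam]).trans_le (by linarith)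
  · exact (Finset.sum_eq_zero fun xy _ => ite_eq_left_iff.2 (hiid xy)).trans_le hε.le
  · exact (Finset.sum_eq_zero fun xy _ =>
      ite_eq_left_iff.2 fun h => hiid xy (Ne.symm h)).trans_le hε.le

end AchievableRates

section Shells

variable {α : Type} [DecidableEq α] {n : ℕ}

/-- The words whose normalized Hamming distance to `x` is within `η` of `θ`. -/
def shell (θ η : ℝ) (x : Fin n → α) : Set (Fin n → α) :=
  {u | |(hammingDist x u : ℝ) - n * θ| ≤ n * η}

lemma mem_shell_comm {θ η : ℝ} {x u : Fin n → α} : u ∈ shell θ η x ↔ x ∈ shell θ η u := by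
  simp only [shell, Set.mem_ofPred_eq, hammingDist_comm x u]

lemma sum_dHam (x y : Fin n → α) : ∑ i, dHam (x i) (y i) = hammingDist x y := by
  rw [hammingDist, Finset.card_filter, Nat.cast_sum]
  refine Finset.sum_congr rfl fun i _ => ?_
  by_cases h : x i = y i <;> simp [dHam, h]

lemma sum_mul_distortion_le {A : Type} [Fintype A] {P : A → ℝ} (hP : IsPmf P) {θ η : ℝ}
    (hθη : 0 ≤ θ + η) (hn : 0 < n) {X F : A → Fin n → α} {G : Set A}
    (hG : ∀ a ∈ G, F a ∈ shell θ η (X a)) :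
    ∑ a, P a * ((n : ℝ)⁻¹ * ∑ i, dHam (X a i) (F a i)) ≤ θ + η + prob P Gᶜ := by
  have hn' : (0 : ℝ) < n := Nat.cast_pos.2 hn
  refine sum_mul_le_add_prob_compl hP G hθη (fun a ha => ?_) fun a => ?_
  · rw [sum_dHam, inv_mul_le_iff₀ hn']
    have hdist : |(hammingDist (X a) (F a) : ℝ) - n * θ| ≤ n * η := hG a ha
    have := (abs_le.1 hdist).2
    linarith
  · rw [sum_dHam, inv_mul_le_iff₀ hn', mul_one]
    exact_mod_cast hammingDist_le_card_fintype.trans_eq (Fintype.card_fin n)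

variable {𝒳 𝒴 : Type} [Fintype 𝒳] [Fintype 𝒴] [DecidableEq 𝒳] [DecidableEq 𝒴]

lemma crAchievable_of_codebooks {q : 𝒳 × 𝒴 → ℝ} (hq : IsPmf q) {d1 d2 r : ℝ} (hd1 : 0 ≤ d1)
    (hd2 : 0 ≤ d2)
    (h : ∀ ε > 0, ∃ (n m K : ℕ) (c : Fin m → Fin K → (Fin n → 𝒳) × (Fin n → 𝒴)),
      0 < n ∧ 0 < m ∧ Real.logb 2 m / n ≤ r + ε ∧ ∃ η, 0 ≤ η ∧ η ≤ ε ∧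
        prob (iid q n) (⋃ j, resolved (shell d1 η) (shell d2 η) (c j))ᶜ ≤ ε) :
    CRAchievable q dHam dHam d1 d2 r := by
  intro ε hε
  obtain ⟨n, m, K, c, hn, hm, hrate, η, hη0, hηε, hfail⟩ := h (ε / 2) (half_pos hε)
  have : Nonempty (Fin m) := ⟨⟨0, hm⟩⟩
  obtain ⟨⟨x, y⟩, -⟩ := exists_le_of_sum_mul_le hq (X := 0) (c := 0) (by simp)
  have : Nonempty (Fin n → 𝒳) := ⟨fun _ => x⟩
  have : Nonempty (Fin n → 𝒴) := ⟨fun _ => y⟩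
  obtain ⟨f, e₁, e₂, he⟩ := exists_binning_code (shell d1 η) (shell d2 η) c
  generalize (⋃ j, resolved (shell d1 η) (shell d2 η) (c j)) = G at hfail he
  have herr {E : (Fin n → 𝒳) × (Fin n → 𝒴) → Prop} (hE : ∀ a ∈ G, E a) :
      prob (iid q n) {a | ¬ E a} ≤ ε := by
    have hsub : {a | ¬ E a} ⊆ Gᶜ := fun a ha haG => ha (hE a haG)
    have := prob_mono (hq.iid n).1 hsub
    linarith
  have hΔ1 := sum_mul_distortion_le (hq.iid n) (add_nonneg hd1 hη0) hn fun a ha => (he a ha).1.1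
  have hΔ2 := sum_mul_distortion_le (hq.iid n) (add_nonneg hd2 hη0) hn
    fun a ha => (congrArg Prod.snd (he a ha).2).symm ▸ (he a ha).1.2
  refine ⟨n, m, f, fun t => (e₁ t).1, fun t => (e₂ t).2, fun t => (e₁ t).2, fun t => (e₂ t).1, hn,
    by linarith, hΔ1.trans (by linarith), hΔ2.trans (by linarith), ?_, ?_⟩
  · exact (sum_ite_zero_eq_prob _ _).trans_le (herr fun a ha => congrArg Prod.fst (he a ha).2)
  · exact (sum_ite_zero_eq_prob _ _).trans_le
      (herr fun a ha => (congrArg Prod.snd (he a ha).2).symm)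

end Shells

section BinarySymmetricChannel

/-- The transition probability of the binary symmetric channel with crossover probability `θ`. -/
def bsc (θ : ℝ) (a b : Bool) : ℝ := if a = b then 1 - θ else θ

/-- The law of the output word `y` when the word `x` is sent through `n` independent uses of the
binary symmetric channel with crossover probability `θ`. -/
def bscPow (θ : ℝ) {n : ℕ} (x y : Fin n → Bool) : ℝ := ∏ i, bsc θ (x i) (y i)

/-- The log-odds `log ((1 - θ) / θ)` of a bit not being flipped: the rate at which the
log-likelihood of an output word of the channel decreases with its distance from the input. -/
def logOdds (θ : ℝ) : ℝ := Real.log (1 - θ) - Real.log θ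

variable {θ η : ℝ} {n : ℕ}

lemma isPmf_bsc (hθ : θ ∈ Set.Icc 0 1) (a : Bool) : IsPmf (bsc θ a) := by
  refine ⟨fun b => ?_, by cases a <;> simp [bsc]⟩
  unfold bsc
  split_ifs <;> linarith [hθ.1, hθ.2]

lemma isCondPmf_bscPow (hθ : θ ∈ Set.Icc 0 1) : IsCondPmf (bscPow θ (n := n)) :=
  fun x => IsPmf.pi fun i => isPmf_bsc hθ (x i)

lemma bscPow_comm (θ : ℝ) (x y : Fin n → Bool) : bscPow θ x y = bscPow θ y x := by
  simp only [bscPow, bsc, eq_comm]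

lemma logOdds_nonneg (hθ : θ ∈ Set.Ioc 0 (1 / 2)) : 0 ≤ logOdds θ :=
  sub_nonneg.2 (Real.log_le_log hθ.1 (by linarith [hθ.2]))

lemma bscPow_eq_exp (hθ : θ ∈ Set.Ioo 0 1) (x y : Fin n → Bool) :
    bscPow θ x y =
      Real.exp (-(n * Real.binEntropy θ) - (hammingDist x y - n * θ) * logOdds θ) := by
  have hbsc (a b : Bool) : bsc θ a b = Real.exp (Real.log (1 - θ) - dHam a b * logOdds θ) := by
    unfold bsc dHam logOdds
    split_ifs
    · simp [Real.exp_log (sub_pos.2 hθ.2)]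
    · simp [Real.exp_log hθ.1]
  simp only [bscPow, hbsc, ← Real.exp_sum]
  rw [Finset.sum_sub_distrib, ← Finset.sum_mul, sum_dHam, Real.binEntropy]
  simp only [Finset.sum_const, Finset.card_univ, Fintype.card_fin, nsmul_eq_mul, Real.log_inv,
    logOdds]
  ring_nf

lemma bscPow_pos (hθ : θ ∈ Set.Ioo 0 1) (x y : Fin n → Bool) : 0 < bscPow θ x y := by
  rw [bscPow_eq_exp hθ]
  exact Real.exp_pos _

lemma log_bscPow (hθ : θ ∈ Set.Ioo 0 1) (x y : Fin n → Bool) :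
    Real.log (bscPow θ x y) =
      -(n * Real.binEntropy θ) - (hammingDist x y - n * θ) * logOdds θ := by
  rw [bscPow_eq_exp hθ, Real.log_exp]

lemma sum_bscPow_mul_bscPow_mul_bscPow {d ρ₀ ρ : ℝ}
    (h : (1 - 2 * ρ₀) * (1 - 2 * d) ^ 2 = 1 - 2 * ρ) (x y : Fin n → Bool) :
    ∑ u, ∑ v, bscPow ρ₀ u v * (bscPow d u x * bscPow d v y) = bscPow ρ x y := by
  have hv (u : Fin n → Bool) :
      ∑ v, bscPow ρ₀ u v * (bscPow d u x * bscPow d v y) =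
        ∏ i, ∑ b, bsc ρ₀ (u i) b * (bsc d (u i) (x i) * bsc d b (y i)) := by
    simp only [bscPow, ← Finset.prod_mul_distrib, Fintype.prod_sum]
  simp only [hv]
  rw [← Fintype.prod_sum fun i a => ∑ b, bsc ρ₀ a b * (bsc d a (x i) * bsc d b (y i)), bscPow]
  refine Finset.prod_congr rfl fun i _ => ?_
  cases x i <;> cases y i <;>
    simp only [bsc, Fintype.sum_bool, if_true, if_false, Bool.false_eq_true, Bool.true_eq_false] <;>
    linarith

lemma sum_bscPow_mul_hammingDist (hθ : θ ∈ Set.Icc 0 1) (x : Fin n → Bool) :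
    ∑ y, bscPow θ x y * hammingDist x y = n * θ := by
  have hletter (a : Bool) : ∑ b, bsc θ a b * dHam a b = θ := by
    cases a <;> simp [bsc, dHam]
  simp only [← sum_dHam, bscPow]
  rw [sum_pi_mul_sum (fun i => isPmf_bsc hθ (x i)) fun i => dHam (x i)]
  simp only [hletter, Finset.sum_const, Finset.card_univ, Fintype.card_fin, nsmul_eq_mul]

lemma sum_bscPow_mul_hammingDist_sub_sq (hθ : θ ∈ Set.Icc 0 1) (x : Fin n → Bool) :
    ∑ y, bscPow θ x y * (hammingDist x y - n * θ) ^ 2 = n * (θ * (1 - θ)) := by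
  have hmean (a : Bool) : ∑ b, bsc θ a b * (dHam a b - θ) = 0 := by
    cases a <;> simp [bsc, dHam] <;> ring
  have hvar (a : Bool) : ∑ b, bsc θ a b * (dHam a b - θ) ^ 2 = θ * (1 - θ) := by
    cases a <;> simp [bsc, dHam] <;> ring
  have hcenter (y : Fin n → Bool) :
      (hammingDist x y - n * θ : ℝ) = ∑ i, (dHam (x i) (y i) - θ) := by
    simp [← sum_dHam]
  simp only [hcenter, bscPow]
  rw [sum_pi_mul_sum_sq (fun i => isPmf_bsc hθ (x i)) fun i => hmean (x i)]
  simp only [hvar, Finset.sum_const, Finset.card_univ, Fintype.card_fin, nsmul_eq_mul]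

lemma prob_bscPow_shell_compl_le (hθ : θ ∈ Set.Icc 0 1) (hη : 0 < η) (hn : 0 < n)
    (x : Fin n → Bool) : prob (bscPow θ x) (shell θ η x)ᶜ ≤ 1 / (4 * n * η ^ 2) := by
  have : (0 : ℝ) < n := Nat.cast_pos.2 hn
  have hcompl : (shell θ η x)ᶜ = {y | n * η < |(hammingDist x y : ℝ) - n * θ|} :=
    Set.ext fun y => by simp only [shell, Set.mem_compl_iff, Set.mem_ofPred_eq, not_le]
  rw [hcompl]
  refine (prob_lt_abs_le (isCondPmf_bscPow hθ x).1 _ (by positivity)).trans ?_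
  rw [sum_bscPow_mul_hammingDist_sub_sq hθ, div_le_div_iff₀ (by positivity) (by positivity)]
  have hvar : θ * (1 - θ) ≤ 1 / 4 := by nlinarith [sq_nonneg (θ - 1 / 2)]
  have := mul_le_mul_of_nonneg_left hvar (by positivity : (0 : ℝ) ≤ 4 * (n ^ 2 * η ^ 2))
  linarith

lemma exp_le_bscPow_of_mem_shell (hθ : θ ∈ Set.Ioc 0 (1 / 2)) {x y : Fin n → Bool}
    (h : y ∈ shell θ η x) :
    Real.exp (-(n * (Real.binEntropy θ + logOdds θ * η))) ≤ bscPow θ x y := by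
  have hdist : |(hammingDist x y : ℝ) - n * θ| ≤ n * η := h
  have := mul_le_mul_of_nonneg_right (abs_le.1 hdist).2 (logOdds_nonneg hθ)
  rw [bscPow_eq_exp ⟨hθ.1, by linarith [hθ.2]⟩, Real.exp_le_exp]
  linarith

lemma bscPow_le_exp_of_mem_shell (hθ : θ ∈ Set.Ioc 0 (1 / 2)) {x y : Fin n → Bool}
    (h : y ∈ shell θ η x) :
    bscPow θ x y ≤ Real.exp (-(n * (Real.binEntropy θ - logOdds θ * η))) := by
  have hdist : |(hammingDist x y : ℝ) - n * θ| ≤ n * η := h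
  have := mul_le_mul_of_nonneg_right (abs_le.1 hdist).1 (logOdds_nonneg hθ)
  rw [bscPow_eq_exp ⟨hθ.1, by linarith [hθ.2]⟩, Real.exp_le_exp]
  linarith

lemma prob_const_shell_le (hθ : θ ∈ Set.Ioc 0 (1 / 2)) {c : ℝ} (hc : 0 ≤ c) (x : Fin n → Bool) :
    prob (fun _ => c) (shell θ η x) ≤
      c * Real.exp (n * (Real.binEntropy θ + logOdds θ * η)) := by
  have hW := isCondPmf_bscPow (n := n) (θ := θ) ⟨hθ.1.le, by linarith [hθ.2]⟩ x
  have hlower (y : Fin n → Bool) (hy : y ∈ shell θ η x) :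
      1 ≤ Real.exp (n * (Real.binEntropy θ + logOdds θ * η)) * bscPow θ x y := by
    rw [← inv_le_iff_one_le_mul₀' (Real.exp_pos _), ← Real.exp_neg]
    exact exp_le_bscPow_of_mem_shell hθ hy
  generalize hE : Real.exp (n * (Real.binEntropy θ + logOdds θ * η)) = E at hlower ⊢
  have hE0 : 0 ≤ E := hE ▸ (Real.exp_pos _).le
  calc prob (fun _ => c) (shell θ η x) ≤ ∑ y, c * E * bscPow θ x y :=
        Finset.sum_le_sum fun y _ => Set.indicator_apply_le'
          (fun hy => by rw [mul_assoc]; exact le_mul_of_one_le_right hc (hlower y hy))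
          fun _ => mul_nonneg (mul_nonneg hc hE0) (hW.1 y)
    _ = c * E := by rw [← Finset.mul_sum, hW.2, mul_one]

end BinarySymmetricChannel

section DoublySymmetricBinarySource

variable {ρ : ℝ} {n : ℕ}

lemma iid_dsbs (ρ : ℝ) (a : (Fin n → Bool) × (Fin n → Bool)) :
    iid (dsbs ρ) n a = (1 / 2) ^ n * bscPow ρ a.1 a.2 := by
  rw [iid, bscPow, ← Fin.prod_const, ← Finset.prod_mul_distrib]
  refine Finset.prod_congr rfl fun i _ => ?_
  simp only [dsbs, bsc]
  split_ifs <;> ring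

lemma iid_dsbs_swap (ρ : ℝ) (a : (Fin n → Bool) × (Fin n → Bool)) :
    iid (dsbs ρ) n a.swap = iid (dsbs ρ) n a := by
  simp only [iid_dsbs, Prod.fst_swap, Prod.snd_swap, bscPow_comm ρ a.1]

lemma isPmf_dsbs (hρ : ρ ∈ Set.Icc 0 1) : IsPmf (dsbs ρ) := by
  refine ⟨fun t => ?_, ?_⟩
  · unfold dsbs
    split_ifs <;> linarith [hρ.1, hρ.2]
  · simp only [dsbs, Fintype.sum_prod_type, Fintype.sum_bool, if_true, if_false,
      Bool.false_eq_true, Bool.true_eq_false]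
    ring

lemma isPmf_half_pow (n : ℕ) : IsPmf fun _ : Fin n → Bool => (1 / 2 : ℝ) ^ n :=
  ⟨fun _ => by positivity, by simp⟩

lemma sum_iid_dsbs_mul_hammingDist (hρ : ρ ∈ Set.Icc 0 1) :
    ∑ a, iid (dsbs ρ) n a * (hammingDist a.1 a.2 : ℝ) = n * ρ := by
  rw [Fintype.sum_prod_type, ← one_mul (n * ρ), ← (isPmf_half_pow n).2, Finset.sum_mul]
  refine Finset.sum_congr rfl fun x _ => ?_
  simp only [iid_dsbs, mul_assoc, ← Finset.mul_sum, sum_bscPow_mul_hammingDist hρ]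

end DoublySymmetricBinarySource

section Converse

lemma sum_mul_decoder_le_card {𝒳 𝒴 𝒰 M : Type} [Fintype 𝒳] [Fintype 𝒴] [Fintype M]
    {P : 𝒴 → ℝ} (hP : IsPmf P) {V : 𝒰 → 𝒳 → ℝ} (hV : IsCondPmf V) (f : 𝒳 × 𝒴 → M)
    (g : M × 𝒴 → 𝒰) : ∑ a, P a.2 * V (g (f a, a.2)) a.1 ≤ Fintype.card M :=
  calc ∑ a : 𝒳 × 𝒴, P a.2 * V (g (f a, a.2)) a.1
      ≤ ∑ a : 𝒳 × 𝒴, P a.2 * ∑ j, V (g (j, a.2)) a.1 := by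
        refine Finset.sum_le_sum fun a _ => mul_le_mul_of_nonneg_left ?_ (hP.1 _)
        exact Finset.single_le_sum (f := fun j => V (g (j, a.2)) a.1)
          (fun j _ => (hV _).1 _) (Finset.mem_univ (f a))
    _ = ∑ y, P y * ∑ j, ∑ x, V (g (j, y)) x := by
        simp only [Fintype.sum_prod_type_right, ← Finset.mul_sum]
        exact Finset.sum_congr rfl fun y _ => by rw [Finset.sum_comm]
    _ = Fintype.card M := by simp [(hV _).2, ← Finset.sum_mul, hP.2]

/-- If `x` is drawn from `W y` and described by a message in `M` to a decoder knowing `y`, then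
reading the decoder's output as a prediction `V u` of `x` gains at most `log |M|` nats over the
prediction `W y`. -/
lemma sum_mul_log_sub_log_le_log_card {𝒳 𝒴 𝒰 M : Type} [Fintype 𝒳] [Fintype 𝒴] [Fintype M]
    [Nonempty M] {P : 𝒴 → ℝ} (hP : IsPmf P) {W : 𝒴 → 𝒳 → ℝ} (hW : IsCondPmf W) {V : 𝒰 → 𝒳 → ℝ}
    (hV : IsCondPmf V) (hVpos : ∀ u x, 0 < V u x) (f : 𝒳 × 𝒴 → M) (g : M × 𝒴 → 𝒰) :
    ∑ a, P a.2 * W a.2 a.1 * (Real.log (V (g (f a, a.2)) a.1) - Real.log (W a.2 a.1)) ≤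
      Real.log (Fintype.card M) := by
  have hcard : (0 : ℝ) < Fintype.card M := Nat.cast_pos.2 Fintype.card_pos
  have hPW : IsPmf fun a : 𝒳 × 𝒴 => P a.2 * W a.2 a.1 :=
    ⟨fun a => mul_nonneg (hP.1 _) ((hW _).1 _), by
      simp only [Fintype.sum_prod_type_right, ← Finset.mul_sum, (hW _).2, mul_one, hP.2]⟩
  have hgibbs := sum_mul_log_sub_log_nonpos hPW
    (Q := fun a => P a.2 * V (g (f a, a.2)) a.1 / Fintype.card M)
    (fun a => div_nonneg (mul_nonneg (hP.1 _) (hVpos _ _).le) hcard.le)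
    (by rw [← Finset.sum_div]; exact div_le_one_of_le₀ (sum_mul_decoder_le_card hP hV f g) hcard.le)
    fun a ha => div_pos (mul_pos (pos_of_mul_pos_left ha ((hW _).1 _)) (hVpos _ _)) hcard
  have hterm (a : 𝒳 × 𝒴) : P a.2 * W a.2 a.1 *
        (Real.log (P a.2 * V (g (f a, a.2)) a.1 / Fintype.card M) -
          Real.log (P a.2 * W a.2 a.1)) =
      P a.2 * W a.2 a.1 * (Real.log (V (g (f a, a.2)) a.1) - Real.log (W a.2 a.1)) -
        P a.2 * W a.2 a.1 * Real.log (Fintype.card M) := by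
    by_cases h0 : P a.2 * W a.2 a.1 = 0
    · simp [h0]
    · have hP0 := left_ne_zero_of_mul h0
      rw [Real.log_div (mul_ne_zero hP0 (hVpos _ _).ne') hcard.ne',
        Real.log_mul hP0 (hVpos _ _).ne', Real.log_mul hP0 (right_ne_zero_of_mul h0)]
      ring
  simp only [hterm, Finset.sum_sub_distrib, ← Finset.sum_mul, hPW.2, one_mul] at hgibbs
  exact sub_nonpos.1 hgibbs

lemma natCast_mul_delta1_dHam {𝒳 𝒴 : Type} [Fintype 𝒳] [Fintype 𝒴] [DecidableEq 𝒳]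
    (q : 𝒳 × 𝒴 → ℝ) {n m : ℕ} (hn : 0 < n) (f : (Fin n → 𝒳) × (Fin n → 𝒴) → Fin m)
    (g : Fin m × (Fin n → 𝒴) → Fin n → 𝒳) :
    n * Delta1 q dHam f g = ∑ a, iid q n a * hammingDist a.1 (g (f a, a.2)) := by
  have hn' : (n : ℝ) ≠ 0 := Nat.cast_ne_zero.2 hn.ne'
  rw [Delta1, Finset.mul_sum]
  refine Finset.sum_congr rfl fun a _ => ?_
  rw [sum_dHam]
  field_simp

lemma mul_binEntropy_sub_le_log_card {ρ D : ℝ} (hρ : ρ ∈ Set.Ioo 0 1) (hD : D ∈ Set.Ioc 0 (1 / 2))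
    {n m : ℕ} (hn : 0 < n) (f : (Fin n → Bool) × (Fin n → Bool) → Fin m)
    (g : Fin m × (Fin n → Bool) → Fin n → Bool) (hΔ : Delta1 (dsbs ρ) dHam f g ≤ D) :
    n * (Real.binEntropy ρ - Real.binEntropy D) ≤ Real.log m := by
  have hD1 : D ∈ Set.Ioo 0 1 := ⟨hD.1, by linarith [hD.2]⟩
  have hP := (isPmf_dsbs (Set.Ioo_subset_Icc_self hρ)).iid n
  have hPW (a : (Fin n → Bool) × (Fin n → Bool)) :
      (1 / 2) ^ n * bscPow ρ a.2 a.1 = iid (dsbs ρ) n a := by rw [iid_dsbs, bscPow_comm]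
  have : Nonempty (Fin m) := ⟨f (fun _ => true, fun _ => true)⟩
  have hgibbs := sum_mul_log_sub_log_le_log_card (isPmf_half_pow n)
    (isCondPmf_bscPow (Set.Ioo_subset_Icc_self hρ)) (isCondPmf_bscPow (Set.Ioo_subset_Icc_self hD1))
    (bscPow_pos hD1) f g
  have hrec : ∑ a, iid (dsbs ρ) n a * (hammingDist (g (f a, a.2)) a.1 : ℝ) ≤ n * D := by
    simp only [hammingDist_comm (g _)]
    rw [← natCast_mul_delta1_dHam _ hn]
    gcongr
  have hexpand : ∑ a, iid (dsbs ρ) n a *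
        (Real.log (bscPow D (g (f a, a.2)) a.1) - Real.log (bscPow ρ a.2 a.1)) =
      n * (Real.binEntropy ρ - Real.binEntropy D + D * logOdds D - ρ * logOdds ρ) -
        (∑ a, iid (dsbs ρ) n a * (hammingDist (g (f a, a.2)) a.1 : ℝ)) * logOdds D +
        (∑ a, iid (dsbs ρ) n a * (hammingDist a.1 a.2 : ℝ)) * logOdds ρ := by
    rw [← one_mul (n * _ : ℝ), ← hP.2, Finset.sum_mul, Finset.sum_mul, Finset.sum_mul,
      ← Finset.sum_sub_distrib, ← Finset.sum_add_distrib]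
    refine Finset.sum_congr rfl fun a _ => ?_
    rw [log_bscPow hD1, log_bscPow hρ, hammingDist_comm a.2]
    ring
  rw [sum_iid_dsbs_mul_hammingDist (Set.Ioo_subset_Icc_self hρ)] at hexpand
  simp only [hPW, hexpand, Fintype.card_fin] at hgibbs
  have := mul_le_mul_of_nonneg_right hrec (logOdds_nonneg hD)
  linarith

lemma binEnt_eq (x : ℝ) : binEnt x = Real.binEntropy x / Real.log 2 := by
  simp only [binEnt, Real.binEntropy, Real.logb, Real.log_inv]
  ring

lemma continuous_binEnt : Continuous binEnt := by
  rw [funext binEnt_eq]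
  exact Real.binEntropy_continuous.div_const _

lemma binEnt_monotoneOn : MonotoneOn binEnt (Set.Icc 0 2⁻¹) := by
  rw [funext binEnt_eq]
  intro x hx y hy hxy
  have := Real.binEntropy_strictMonoOn.monotoneOn hx hy hxy
  have := Real.log_pos one_lt_two
  simp only
  gcongr

lemma RDAchievable.binEnt_sub_le {ρ d d₂ r : ℝ} {Yh : Type} {δ : Bool → Yh → ℝ}
    (hρ : ρ ∈ Set.Icc 0 (1 / 2)) (hd : d ∈ Set.Icc 0 (1 / 2))
    (h : RDAchievable (dsbs ρ) dHam δ d d₂ r) : binEnt ρ - binEnt d ≤ r := by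
  rcases le_or_gt ρ d with hρd | hdρ
  · have := binEnt_monotoneOn ⟨hρ.1, by linarith [hρ.2]⟩ ⟨hd.1, by linarith [hd.2]⟩ hρd
    linarith [h.nonneg]
  have hslack (ε : ℝ) (hε : ε ∈ Set.Ioc 0 (1 / 2 - d)) :
      binEnt ρ - binEnt (d + ε) ≤ r + ε := by
    obtain ⟨n, m, f, g, -, hn, hrate, hΔ, -⟩ := h ε hε.1
    have hlog := mul_binEntropy_sub_le_log_card ⟨hd.1.trans_lt hdρ, by linarith [hρ.2]⟩
      ⟨by linarith [hd.1, hε.1], by linarith [hε.2]⟩ hn f g hΔ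
    refine le_trans ?_ hrate
    rw [binEnt_eq, binEnt_eq, ← sub_div, Real.logb, div_right_comm]
    have := Real.log_pos one_lt_two
    gcongr
    rwa [le_div_iff₀' (Nat.cast_pos.2 hn)]
  have hcont : Continuous fun ε => binEnt ρ - binEnt (d + ε) - ε := by
    have := continuous_binEnt
    fun_prop
  have hlim := (hcont.tendsto 0).mono_left (nhdsWithin_le_nhds (s := Set.Ioi 0))
  simp only [add_zero, sub_zero] at hlim
  refine le_of_tendsto hlim ?_
  filter_upwards [Ioc_mem_nhdsGT (sub_pos.2 (hdρ.trans_le hρ.2))] with ε hε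
  linarith [hslack ε hε]

end Converse

section RandomCodebooks

variable {d ρ ρ₀ η : ℝ} {n : ℕ}

lemma half_pow_eq_exp (n : ℕ) : (1 / 2 : ℝ) ^ n = Real.exp (-(n * Real.log 2)) := by
  rw [← mul_neg, Real.exp_nat_mul, Real.exp_neg, Real.exp_log two_pos, one_div]

/-- A lower bound on the probability that a single random pair of reconstructions is close to a
typical source pair. The exponent `log 2 + h ρ - 2 * h d` is the mutual information, in nats,
between the source and the reconstructions; the multiple of `η` pays for the width of the
shells. -/
def coverProb (d ρ η : ℝ) (n : ℕ) : ℝ :=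
  Real.exp (-(n * (Real.log 2 + Real.binEntropy ρ - 2 * Real.binEntropy d +
    (logOdds ρ + 2 * logOdds d) * η))) / 2

lemma sum_iid_dsbs_mul_bscPow_mul_bscPow (hconv : (1 - 2 * ρ₀) * (1 - 2 * d) ^ 2 = 1 - 2 * ρ) :
    (fun a => ∑ s, iid (dsbs ρ₀) n s * (bscPow d s.1 a.1 * bscPow d s.2 a.2)) =
      iid (dsbs ρ) n := by
  funext a
  simp only [iid_dsbs, Fintype.sum_prod_type, mul_assoc, ← Finset.mul_sum]
  rw [sum_bscPow_mul_bscPow_mul_bscPow hconv]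

lemma prob_iid_dsbs_notMem_shell_le (hρ : ρ ∈ Set.Icc 0 1) (hη : 0 < η) (hn : 0 < n) :
    prob (iid (dsbs ρ) n) {a | a.2 ∉ shell ρ η a.1} ≤ 1 / (4 * n * η ^ 2) := by
  rw [funext (iid_dsbs ρ)]
  exact prob_joint_le (isPmf_half_pow n) fun x => prob_bscPow_shell_compl_le hρ hη hn x

lemma prob_bscPow_prod_shell_compl_le (hd : d ∈ Set.Icc 0 1) (hη : 0 < η) (hn : 0 < n)
    (u v : Fin n → Bool) :
    prob (fun a => bscPow d u a.1 * bscPow d v a.2) (shell d η u ×ˢ shell d η v)ᶜ ≤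
      2 * (1 / (4 * n * η ^ 2)) := by
  have hW := isCondPmf_bscPow (n := n) hd
  rw [Set.compl_prod_eq_union, two_mul]
  refine (prob_union_le (fun a => mul_nonneg ((hW u).1 _) ((hW v).1 _)) _ _).trans ?_
  rw [Set.prod_univ, Set.univ_prod,
    prob_fst_preimage (W := fun _ => bscPow d v) (bscPow d u) (fun _ => hW v),
    prob_snd_preimage (hW u)]
  exact add_le_add (prob_bscPow_shell_compl_le hd hη hn u) (prob_bscPow_shell_compl_le hd hη hn v)

lemma two_mul_coverProb_le_iid_dsbs (hρ : ρ ∈ Set.Ioc 0 (1 / 2))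
    {a : (Fin n → Bool) × (Fin n → Bool)} (ha : a.2 ∈ shell ρ η a.1) :
    2 * (Real.exp (-(n * (Real.binEntropy d - logOdds d * η))) ^ 2 * coverProb d ρ η n) ≤
      iid (dsbs ρ) n a := by
  have hexp :
      2 * (Real.exp (-(n * (Real.binEntropy d - logOdds d * η))) ^ 2 * coverProb d ρ η n) =
        (1 / 2) ^ n * Real.exp (-(n * (Real.binEntropy ρ + logOdds ρ * η))) := by
    rw [coverProb, mul_div_assoc', mul_div_cancel₀ _ two_ne_zero, half_pow_eq_exp, sq,
      ← Real.exp_add, ← Real.exp_add, ← Real.exp_add]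
    ring_nf
  rw [hexp, iid_dsbs]
  gcongr
  exact exp_le_bscPow_of_mem_shell hρ ha

lemma prob_two_mul_coverProb_le_and_lt_le (hd : d ∈ Set.Ioc 0 (1 / 2)) (hρ₀ : ρ₀ ∈ Set.Icc 0 1)
    (hconv : (1 - 2 * ρ₀) * (1 - 2 * d) ^ 2 = 1 - 2 * ρ) (hη : 0 < η) (hn : 0 < n) :
    prob (iid (dsbs ρ) n)
      {a | 2 * (Real.exp (-(n * (Real.binEntropy d - logOdds d * η))) ^ 2 * coverProb d ρ η n) ≤
          iid (dsbs ρ) n a ∧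
        prob (iid (dsbs ρ₀) n) (shell d η a.1 ×ˢ shell d η a.2) < coverProb d ρ η n} ≤
      2 * (2 * (1 / (4 * n * η ^ 2))) := by
  have hd' : d ∈ Set.Icc 0 1 := ⟨hd.1.le, by linarith [hd.2]⟩
  have hQ := (isPmf_dsbs hρ₀).iid n
  have hW (s : Fin n → Bool) := (isCondPmf_bscPow hd' s).1
  have hrare := prob_sum_mul_of_prob_lt_le hQ.1
    (W := fun s (a : (Fin n → Bool) × (Fin n → Bool)) => bscPow d s.1 a.1 * bscPow d s.2 a.2)
    (fun s a => mul_nonneg (hW _ _) (hW _ _)) (fun a => shell d η a.1 ×ˢ shell d η a.2)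
    (w := Real.exp (-(n * (Real.binEntropy d - logOdds d * η))) ^ 2) (τ := coverProb d ρ η n)
    (by positivity) fun a s hs => by
      rw [sq]
      exact mul_le_mul (bscPow_le_exp_of_mem_shell hd (mem_shell_comm.1 hs.1))
        (bscPow_le_exp_of_mem_shell hd (mem_shell_comm.1 hs.2)) (hW _ _) (Real.exp_pos _).le
  rw [sum_iid_dsbs_mul_bscPow_mul_bscPow hconv] at hrare
  simp only [congrFun (sum_iid_dsbs_mul_bscPow_mul_bscPow hconv) _] at hrare
  refine hrare.trans (mul_le_mul_of_nonneg_left ?_ two_pos.le)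
  refine (Finset.sum_le_sum fun s _ => mul_le_mul_of_nonneg_left ?_ (hQ.1 s)).trans_eq
    (b := ∑ s, iid (dsbs ρ₀) n s * (2 * (1 / (4 * n * η ^ 2))))
    (by rw [← Finset.sum_mul, hQ.2, one_mul])
  simp only [Set.mem_prod, mem_shell_comm (u := s.1), mem_shell_comm (u := s.2)]
  exact prob_bscPow_prod_shell_compl_le hd' hη hn s.1 s.2

lemma prob_prob_prod_shell_lt_coverProb_le (hd : d ∈ Set.Ioc 0 (1 / 2)) (hρ : ρ ∈ Set.Ioc 0 (1 / 2))
    (hρ₀ : ρ₀ ∈ Set.Icc 0 1) (hconv : (1 - 2 * ρ₀) * (1 - 2 * d) ^ 2 = 1 - 2 * ρ) (hη : 0 < η)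
    (hn : 0 < n) :
    prob (iid (dsbs ρ) n)
      {a | prob (iid (dsbs ρ₀) n) (shell d η a.1 ×ˢ shell d η a.2) < coverProb d ρ η n} ≤
      5 / (4 * n * η ^ 2) := by
  have hρ' : ρ ∈ Set.Icc 0 1 := ⟨hρ.1.le, by linarith [hρ.2]⟩
  have hP := ((isPmf_dsbs hρ').iid n).1
  refine (prob_mono hP fun a ha => ?_).trans <| (prob_union_le hP _ _).trans <|
    (add_le_add (prob_iid_dsbs_notMem_shell_le hρ' hη hn)
      (prob_two_mul_coverProb_le_and_lt_le hd hρ₀ hconv hη hn)).trans_eq ?_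
  · exact (em (a.2 ∈ shell ρ η a.1)).symm.imp id
      fun h => ⟨two_mul_coverProb_le_iid_dsbs hρ h, ha⟩
  · ring

lemma prob_iid_dsbs_union_shell_le (hd : d ∈ Set.Ioc 0 (1 / 2)) (hρ₀ : ρ₀ ∈ Set.Icc 0 1)
    (x y : Fin n → Bool) :
    prob (iid (dsbs ρ₀) n) (Prod.fst ⁻¹' shell d η x ∪ Prod.snd ⁻¹' shell d η y) ≤
      2 * Real.exp (-(n * (Real.log 2 - Real.binEntropy d - logOdds d * η))) := by
  have hfst (z : Fin n → Bool) : prob (iid (dsbs ρ₀) n) (Prod.fst ⁻¹' shell d η z) ≤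
      Real.exp (-(n * (Real.log 2 - Real.binEntropy d - logOdds d * η))) := by
    rw [funext (iid_dsbs ρ₀)]
    refine (prob_fst_preimage (fun _ => (1 / 2) ^ n) (isCondPmf_bscPow hρ₀) _).trans_le <|
      (prob_const_shell_le hd (by positivity) z).trans_eq ?_
    rw [half_pow_eq_exp, ← Real.exp_add]
    ring_nf
  have hsnd : prob (iid (dsbs ρ₀) n) (Prod.snd ⁻¹' shell d η y) =
      prob (iid (dsbs ρ₀) n) (Prod.fst ⁻¹' shell d η y) := by
    rw [← prob_comp_equiv (Equiv.prodComm _ _) _ (Prod.fst ⁻¹' shell d η y)]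
    congr 1
    exact funext fun a => (iid_dsbs_swap ρ₀ a).symm
  have := prob_union_le ((isPmf_dsbs hρ₀).iid n).1 (Prod.fst ⁻¹' shell d η x)
    (Prod.snd ⁻¹' shell d η y)
  linarith [hfst x, hfst y]

lemma exists_codebook (hd : d ∈ Set.Ioc 0 (1 / 2)) (hρ : ρ ∈ Set.Ioc 0 (1 / 2))
    (hρ₀ : ρ₀ ∈ Set.Icc 0 1) (hconv : (1 - 2 * ρ₀) * (1 - 2 * d) ^ 2 = 1 - 2 * ρ) (hη : 0 < η)
    (hn : 0 < n) {K : ℕ} (m : ℕ)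
    (hK : 4 * K * Real.exp (-(n * (Real.log 2 - Real.binEntropy d - logOdds d * η))) ≤ 1) :
    ∃ c : Fin m → Fin K → (Fin n → Bool) × (Fin n → Bool),
      prob (iid (dsbs ρ) n) (⋃ j, resolved (shell d η) (shell d η) (c j))ᶜ ≤
        Real.exp (-(K * coverProb d ρ η n / 2 * m)) + 5 / (4 * n * η ^ 2) := by
  have hQ := (isPmf_dsbs hρ₀).iid n
  have hP := (isPmf_dsbs ⟨hρ.1.le, by linarith [hρ.2]⟩).iid n
  set T : Set ((Fin n → Bool) × (Fin n → Bool)) :=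
    {a | coverProb d ρ η n ≤ prob (iid (dsbs ρ₀) n) (shell d η a.1 ×ˢ shell d η a.2)} with hT
  obtain ⟨c, hc⟩ := exists_prob_uncovered_le hP (IsPmf.pi fun _ : Fin K => hQ)
    (resolved (shell d η) (shell d η)) T (ι := Fin m) (p := K * coverProb d ρ η n / 2)
    fun a ha => by
      have hbad : Fintype.card (Fin K) * prob (iid (dsbs ρ₀) n)
          (Prod.fst ⁻¹' shell d η a.1 ∪ Prod.snd ⁻¹' shell d η a.2) ≤ 1 / 2 := by
        rw [Fintype.card_fin]
        have := mul_le_mul_of_nonneg_left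
          (prob_iid_dsbs_union_shell_le (η := η) hd hρ₀ a.1 a.2) (Nat.cast_nonneg (α := ℝ) K)
        linarith
      have hisolate := half_card_mul_prob_le_prob_isolates hQ
        (fun s (hs : s ∈ shell d η a.1 ×ˢ shell d η a.2) => Or.inl hs.1) hbad
      rw [Fintype.card_fin] at hisolate
      refine le_trans ?_ hisolate
      gcongr
      exact ha
  rw [Fintype.card_fin] at hc
  refine ⟨c, ?_⟩
  set G := ⋃ j, resolved (shell d η) (shell d η) (c j)
  have hsub : Gᶜ ⊆ T \ G ∪ Tᶜ := fun a ha => (em (a ∈ T)).imp (fun h => ⟨h, ha⟩) id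
  refine (prob_mono hP.1 hsub).trans ((prob_union_le hP.1 _ _).trans (add_le_add hc ?_))
  rw [hT, Set.compl_ofPred]
  simp only [not_le]
  exact prob_prob_prod_shell_lt_coverProb_le hd hρ hρ₀ hconv hη hn

end RandomCodebooks

section Achievability

/-- The number of codewords in each bin. The exponent falls short of `log 2 - h d`, the mutual
information in nats between one source and its reconstruction, by `2 * δ`, so that each receiver
can resolve the bin from its own source. -/
def binSize (d δ : ℝ) (n : ℕ) : ℕ := ⌊Real.exp (n * (Real.log 2 - Real.binEntropy d - 2 * δ))⌋₊

/-- The number of bins, at rate `h ρ - h d + 4 * δ` nats. Together with `binSize` it makes the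
codebook larger than the inverse of `coverProb`. -/
def numBins (d ρ δ : ℝ) (n : ℕ) : ℕ :=
  ⌈Real.exp (n * (Real.binEntropy ρ - Real.binEntropy d + 4 * δ))⌉₊

variable {d ρ ρ₀ η δ : ℝ} {n : ℕ}

lemma numBins_pos (d ρ δ : ℝ) (n : ℕ) : 0 < numBins d ρ δ n := Nat.ceil_pos.2 (Real.exp_pos _)

lemma log_numBins_le (hdρ : Real.binEntropy d ≤ Real.binEntropy ρ) (hδ : 0 ≤ δ)
    (hnδ : 2 ≤ Real.exp (n * δ)) :
    Real.log (numBins d ρ δ n) ≤ n * (Real.binEntropy ρ - Real.binEntropy d + 5 * δ) := by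
  have hone : 1 ≤ Real.exp (n * (Real.binEntropy ρ - Real.binEntropy d + 4 * δ)) :=
    Real.one_le_exp (mul_nonneg n.cast_nonneg (by linarith))
  rw [Real.log_le_iff_le_exp (Nat.cast_pos.2 (numBins_pos d ρ δ n))]
  calc (numBins d ρ δ n : ℝ)
      ≤ 2 * Real.exp (n * (Real.binEntropy ρ - Real.binEntropy d + 4 * δ)) :=
        Nat.ceil_le_two_mul (by linarith)
    _ ≤ Real.exp (n * δ) * Real.exp (n * (Real.binEntropy ρ - Real.binEntropy d + 4 * δ)) := by
        gcongr
    _ = Real.exp (n * (Real.binEntropy ρ - Real.binEntropy d + 5 * δ)) := by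
        rw [← Real.exp_add]
        ring_nf

lemma four_mul_binSize_mul_exp_le_one (hηδ : logOdds d * η ≤ δ) (hnδ : 4 ≤ Real.exp (n * δ)) :
    4 * binSize d δ n *
      Real.exp (-(n * (Real.log 2 - Real.binEntropy d - logOdds d * η))) ≤ 1 :=
  calc 4 * binSize d δ n * Real.exp (-(n * (Real.log 2 - Real.binEntropy d - logOdds d * η)))
      ≤ 4 * Real.exp (n * (Real.log 2 - Real.binEntropy d - 2 * δ)) *
          Real.exp (-(n * (Real.log 2 - Real.binEntropy d - logOdds d * η))) := by
        gcongr
        exact Nat.floor_le (Real.exp_pos _).le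
    _ = 4 * Real.exp (n * (logOdds d * η - 2 * δ)) := by
        rw [mul_assoc, ← Real.exp_add]
        ring_nf
    _ ≤ Real.exp (n * δ) * Real.exp (n * -δ) := by
        gcongr
        linarith
    _ = 1 := by rw [mul_neg, ← Real.exp_add, add_neg_cancel, Real.exp_zero]

lemma exp_div_eight_le_binSize_mul_coverProb_mul_numBins
    (hηδ : (logOdds ρ + 2 * logOdds d) * η ≤ δ) (hδ : 2 * δ ≤ Real.log 2 - Real.binEntropy d) :
    Real.exp (n * δ) / 8 ≤ binSize d δ n * coverProb d ρ η n / 2 * numBins d ρ δ n := by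
  have hone : 1 ≤ Real.exp (n * (Real.log 2 - Real.binEntropy d - 2 * δ)) :=
    Real.one_le_exp (mul_nonneg n.cast_nonneg (by linarith))
  have hcover : 0 ≤ coverProb d ρ η n := div_nonneg (Real.exp_pos _).le two_pos.le
  calc Real.exp (n * δ) / 8
      ≤ Real.exp (n * (2 * δ - (logOdds ρ + 2 * logOdds d) * η)) / 8 := by
        gcongr
        linarith
    _ = Real.exp (n * (Real.log 2 - Real.binEntropy d - 2 * δ)) / 2 * coverProb d ρ η n / 2 *
          Real.exp (n * (Real.binEntropy ρ - Real.binEntropy d + 4 * δ)) := by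
        rw [coverProb, div_mul_div_comm, ← Real.exp_add, div_div, div_mul_eq_mul_div,
          ← Real.exp_add]
        ring_nf
    _ ≤ binSize d δ n * coverProb d ρ η n / 2 * numBins d ρ δ n := by
        gcongr
        · exact (Nat.div_two_lt_floor hone).le
        · exact Nat.le_ceil _

lemma exists_codebook_of_slack (hd : d ∈ Set.Ioc 0 (1 / 2)) (hρ : ρ ∈ Set.Ioc 0 (1 / 2))
    (hρ₀ : ρ₀ ∈ Set.Icc 0 1) (hconv : (1 - 2 * ρ₀) * (1 - 2 * d) ^ 2 = 1 - 2 * ρ) (hη : 0 < η)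
    (hηδ : (logOdds ρ + 2 * logOdds d) * η ≤ δ) (hδ : 2 * δ ≤ Real.log 2 - Real.binEntropy d)
    (hn : 0 < n) (hnδ : 4 ≤ Real.exp (n * δ)) :
    ∃ c : Fin (numBins d ρ δ n) → Fin (binSize d δ n) → (Fin n → Bool) × (Fin n → Bool),
      prob (iid (dsbs ρ) n) (⋃ j, resolved (shell d η) (shell d η) (c j))ᶜ ≤
        Real.exp (-(Real.exp (n * δ) / 8)) + 5 / (4 * n * η ^ 2) := by
  have hLρ : 0 ≤ logOdds ρ * η := mul_nonneg (logOdds_nonneg hρ) hη.le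
  have hLd : 0 ≤ logOdds d * η := mul_nonneg (logOdds_nonneg hd) hη.le
  obtain ⟨c, hc⟩ := exists_codebook hd hρ hρ₀ hconv hη hn (numBins d ρ δ n)
    (four_mul_binSize_mul_exp_le_one (by linarith) hnδ)
  refine ⟨c, hc.trans ?_⟩
  gcongr
  exact exp_div_eight_le_binSize_mul_coverProb_mul_numBins hηδ hδ

lemma eventually_exp_add_div_le (hδ : 0 < δ) (hη : η ≠ 0) {ε : ℝ} (hε : 0 < ε) :
    ∀ᶠ n : ℕ in Filter.atTop, 4 ≤ Real.exp (n * δ) ∧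
      Real.exp (-(Real.exp (n * δ) / 8)) + 5 / (4 * n * η ^ 2) ≤ ε := by
  have hcast := tendsto_natCast_atTop_atTop (R := ℝ)
  have hexp : Filter.Tendsto (fun n : ℕ => Real.exp (n * δ)) Filter.atTop Filter.atTop :=
    Real.tendsto_exp_atTop.comp (hcast.atTop_mul_const hδ)
  have hcovering := Real.tendsto_exp_neg_atTop_nhds_zero.comp
    (hexp.atTop_div_const (by norm_num : (0 : ℝ) < 8))
  have htypical : Filter.Tendsto (fun n : ℕ => 5 / (4 * (n : ℝ) * η ^ 2)) Filter.atTop (nhds 0) :=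
    Filter.Tendsto.const_div_atTop
      ((hcast.const_mul_atTop (by norm_num)).atTop_mul_const (by positivity)) 5
  have hsum := hcovering.add htypical
  rw [add_zero] at hsum
  exact (hexp.eventually_ge_atTop 4).and (hsum.eventually_le_const hε)

lemma crAchievable_dsbs_of_conv (hd : d ∈ Set.Ioo 0 (1 / 2)) (hρ : ρ ∈ Set.Ioc 0 (1 / 2))
    (hρ₀ : ρ₀ ∈ Set.Icc 0 1) (hconv : (1 - 2 * ρ₀) * (1 - 2 * d) ^ 2 = 1 - 2 * ρ) :
    CRAchievable (dsbs ρ) dHam dHam d d (binEnt ρ - binEnt d) := by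
  have hd' : d ∈ Set.Ioc 0 (1 / 2) := Set.Ioo_subset_Ioc_self hd
  refine crAchievable_of_codebooks (isPmf_dsbs ⟨hρ.1.le, by linarith [hρ.2]⟩) hd.1.le hd.1.le
    fun ε hε => ?_
  have hlog2 := Real.log_pos one_lt_two
  have hgap : 0 < Real.log 2 - Real.binEntropy d :=
    sub_pos.2 (Real.binEntropy_lt_log_two.2 (by linarith [hd.2]))
  have hdρ : Real.binEntropy d ≤ Real.binEntropy ρ :=
    Real.binEntropy_strictMonoOn.monotoneOn ⟨hd.1.le, by linarith [hd.2]⟩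
      ⟨hρ.1.le, by linarith [hρ.2]⟩ (by nlinarith [hd.1, hd.2, hρ₀.1])
  obtain ⟨δ, hδ, hδle⟩ := exists_between
    (lt_min (by positivity : 0 < ε * Real.log 2 / 5) (half_pos hgap))
  obtain ⟨hδε, hδgap⟩ := lt_min_iff.1 hδle
  have hL : 0 < logOdds ρ + 2 * logOdds d + 1 := by
    linarith [logOdds_nonneg hρ, logOdds_nonneg hd']
  obtain ⟨η, hη, hηle⟩ := exists_between (lt_min hε (div_pos hδ hL))
  obtain ⟨hηε, hηδ⟩ := lt_min_iff.1 hηle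
  rw [lt_div_iff₀' hL] at hηδ
  obtain ⟨n, ⟨hnδ, hnε⟩, hn⟩ :=
    ((eventually_exp_add_div_le hδ hη.ne' hε).and (Filter.eventually_gt_atTop 0)).exists
  obtain ⟨c, hc⟩ := exists_codebook_of_slack hd' hρ hρ₀ hconv hη (by linarith) (by linarith)
    hn hnδ
  refine ⟨n, _, _, c, hn, numBins_pos d ρ δ n, ?_, η, hη.le, hηε.le, hc.trans hnε⟩
  have hn' : (0 : ℝ) < n := Nat.cast_pos.2 hn
  rw [binEnt_eq, binEnt_eq, Real.logb, div_right_comm, ← sub_div, ← sub_le_iff_le_add', ← sub_div,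
    div_le_iff₀ hlog2, sub_le_iff_le_add', div_le_iff₀' hn']
  refine (log_numBins_le hdρ hδ.le (by linarith)).trans
    (mul_le_mul_of_nonneg_left (by linarith) hn'.le)

lemma crAchievable_dsbs (hρ : ρ ∈ Set.Icc 0 (1 / 2))
    (hd : d ∈ Set.Icc 0 (1 / 2 - Real.sqrt (1 - 2 * ρ) / 2)) :
    CRAchievable (dsbs ρ) dHam dHam d d (binEnt ρ - binEnt d) := by
  rcases hρ.1.eq_or_lt with rfl | hρpos
  · obtain rfl : d = 0 := le_antisymm (by simpa using hd.2) hd.1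
    rw [sub_self]
    exact crAchievable_zero_of_eq fun x y hxy => by simp [dsbs, hxy]
  have hsqrt_lt : Real.sqrt (1 - 2 * ρ) < 1 := by
    rw [Real.sqrt_lt' one_pos]
    linarith
  refine CRAchievable.of_approx fun ε hε => ?_
  have hnear : ∀ᶠ d' in nhds d, d' ≤ d + ε ∧ binEnt d - ε ≤ binEnt d' :=
    (eventually_le_nhds (by linarith)).and
      (continuous_binEnt.continuousAt.eventually_const_le (by linarith))
  have hclosure : d ∈ closure (Set.Ioo 0 (1 / 2 - Real.sqrt (1 - 2 * ρ) / 2)) := by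
    rwa [closure_Ioo (by linarith)]
  obtain ⟨d', ⟨hd'pos, hd'lt⟩, hd'd, hent⟩ :=
    ((mem_closure_iff_frequently.1 hclosure).and_eventually hnear).exists
  have hd'half : d' < 1 / 2 := by linarith [Real.sqrt_nonneg (1 - 2 * ρ)]
  have hsq : 0 < (1 - 2 * d') ^ 2 := pow_pos (by linarith) 2
  have hratio : (1 - 2 * ρ) / (1 - 2 * d') ^ 2 ∈ Set.Icc 0 1 := by
    refine ⟨div_nonneg (by linarith [hρ.2]) hsq.le, (div_le_one hsq).2 ?_⟩
    exact (Real.sqrt_le_left (by linarith)).1 (by linarith)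
  refine ⟨d', hd'd, d', hd'd, _, by linarith, crAchievable_dsbs_of_conv
    (ρ₀ := (1 - (1 - 2 * ρ) / (1 - 2 * d') ^ 2) / 2) ⟨hd'pos, hd'half⟩ ⟨hρpos, hρ.2⟩
    ⟨by linarith [hratio.2], by linarith [hratio.1]⟩ ?_⟩
  rw [mul_div_cancel₀ _ two_ne_zero, sub_sub_cancel, div_mul_cancel₀ _ hsq.ne']

end Achievability

end TWR

open TWR in
/-- Theorem 3, part (i): for the DSBS with Hamming
distortions and `d ∈ [0, d*]` with `d* = 1/2 − (1/2)√(1−2ρ)`,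
`R_CR(d,d) = R(d,d) = h(ρ) − h(d)`. -/
theorem dsbs_cr_small_distortion
    (ρ : ℝ) (hρ : ρ ∈ Set.Icc (0 : ℝ) (1 / 2)) (d : ℝ)
    (hd : d ∈ Set.Icc (0 : ℝ) (1 / 2 - Real.sqrt (1 - 2 * ρ) / 2)) :
    CRRD (dsbs ρ) (dHam (α := Bool)) (dHam (α := Bool)) d d =
      RD (dsbs ρ) (dHam (α := Bool)) (dHam (α := Bool)) d d ∧
    RD (dsbs ρ) (dHam (α := Bool)) (dHam (α := Bool)) d d = binEnt ρ - binEnt d := by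
  have hachieve := crAchievable_dsbs hρ hd
  have hnonneg : 0 ≤ binEnt ρ - binEnt d := hachieve.rdAchievable.nonneg
  have hd' : d ∈ Set.Icc (0 : ℝ) (1 / 2) := ⟨hd.1, by linarith [hd.2, Real.sqrt_nonneg (1 - 2 * ρ)]⟩
  have hRD : RD (dsbs ρ) dHam dHam d d = binEnt ρ - binEnt d :=
    IsLeast.csInf_eq ⟨⟨hnonneg, hachieve.rdAchievable⟩, fun r hr => hr.2.binEnt_sub_le hρ hd'⟩
  have hCRRD : CRRD (dsbs ρ) dHam dHam d d = binEnt ρ - binEnt d :=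
    IsLeast.csInf_eq ⟨⟨hnonneg, hachieve⟩, fun r hr => hr.2.rdAchievable.binEnt_sub_le hρ hd'⟩
  exact ⟨hCRRD.trans hRD.symm, hRD⟩
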